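/- Let 𝔑 be an admissible weight matrix, N ∈ 𝔑, and S the descendant of N. Let E be a compact subset of ℝ^n. Then for every Whitney jet F of class B^{S} on E there exist Ṅ ∈ 𝔑 and f ∈ C^∞(ℝ^n) with ∂^α f|_E = F^α for all α ∈ ℕ^n and constants C, ρ > 0 such that |∂^α f(x)| ≤ C ρ^{|α|} Ṅ_{|α|} for all α ∈ ℕ^n and x ∈ ℝ^n; that is, the jet mapping j_E^∞ : ⋃_{Ṅ∈𝔑} B^{Ṅ}(ℝ^n) → B^{S}(E) is surjective. -/

import Mathlib

/-! # Extension of Whitney jets for admissible weight matrices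

Let `τ` and `τ'` belong to `ν` and to another member `ν'` of the matrix, and put
`P_q = ∏_{j ≤ q} τ'_j / τ'_q ≥ 1`. The extension of a jet `F` is built on the scales `d_q = c τ'_q`
from `u_q = ∑_m ψ_{q,m} T_{a_m}^{Kq-1} F`, where `(ψ_{q,m})_m` is a partition of unity near `E`
subordinate to balls of radius about `d_q`, the `a_m ∈ E` are points close to the supports, and `K`
is a large fixed integer. The extension is `u_1 + ∑_q w_q`, where `w_q` coincides with
`u_{q+1} - u_q` near `E`.

* `GoodSeq.factorial_le`: `k! ≤ τ'_q^k N'_k P_q` for all `k` and `q`. Hence anything whose `k`-th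
  derivative is bounded by `k! d_q^{-k}` (polynomials, by `GoodSeq.Gb_poly`) obeys the derivative
  bounds of `N'`, at the price of one factor `P_q`.
* `GoodSeq.exists_isPartition`: by non-quasianalyticity there are smooth steps of width about `d_q`,
  made by averaging over intervals of lengths proportional to `τ'_q / q` (`q` times) and to
  `1 / ν'_j` (`j > q`). Their derivatives obey the bounds of `N'` up to a factor `e^q P_q`, and
  tensor products of them give the partitions of unity.
* `Gb_Tpoly_sub`: for points of `E` at distance at most `d_q`, the difference of the two Taylor
  polynomials is bounded by the Whitney remainder of order `k = K q`, which is of size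
  `ρ^k S_k d_q^k / k!`. By condition (5), iterated, `ν'` can be chosen with `ν_{Kk} ≲ ν'_k`, hence
  `τ'_q ≲ τ_{Kq}`, and `flat_le` bounds that size by `(θ^q / P_q)^K`, with `θ` proportional to `c`.
* `decay_aux`: condition (3) says `τ'_q ≲ τ'_{q+1}`, so `P_{q+1} ≤ B^q P_q`. The cutoffs and the
  Taylor polynomials together cost `2 n + 1` powers of `P_q` and factors geometric in `q`. If
  `K ≥ 2 n + 1` and `c` is small, the correction `w_q` is therefore `O(2^{-q})` in the class of `N'`.

So the series converges with all derivatives and its sum has the bounds of `N'`. On `E` its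
derivatives are the limits of those of `u_q`, and these converge to the jet by the same estimate,
applied to `T_{a_m}^{Kq-1} F - T_a^{Kq-1} F` at `a ∈ E`.
-/

/-- The tail sum `∑_{j ≥ k} 1/ν_j`. -/
noncomputable def tailSum (ν : ℕ → ℝ) (k : ℕ) : ℝ := ∑' i : ℕ, 1 / ν (i + k)

/-- `τ_k = k/ν_k + ∑_{j ≥ k} 1/ν_j` (for `k ≥ 1`). -/
noncomputable def tauSeq (ν : ℕ → ℝ) (k : ℕ) : ℝ := (k : ℝ) / ν k + tailSum ν k

/-- The descendant `σ` of `ν`: `σ_0 = 1`, `σ_k = τ_1 k / τ_k` for `k ≥ 1`. -/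
noncomputable def sigmaSeq (ν : ℕ → ℝ) : ℕ → ℝ
  | 0 => 1
  | (k + 1) => tauSeq ν 1 * ((k : ℝ) + 1) / tauSeq ν (k + 1)

/-- `N_k = ν_0 ν_1 ⋯ ν_k`. -/
noncomputable def prodSeq (ν : ℕ → ℝ) (k : ℕ) : ℝ := ∏ i ∈ Finset.range (k + 1), ν i

/-- `h_s(t) = inf_k s_k t^k`. -/
noncomputable def hFun (s : ℕ → ℝ) (t : ℝ) : ℝ := ⨅ k : ℕ, s k * t ^ k

/-- `s_k = S_k / k!`, where `S` is the descendant of `ν`. -/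
noncomputable def smallS (ν : ℕ → ℝ) (k : ℕ) : ℝ :=
  prodSeq (sigmaSeq ν) k / (Nat.factorial k : ℝ)

/-- `ν` is the quotient sequence of a weight sequence: increasing, positive, `ν_0 = 1`,
and `N_k^{1/k} → ∞` for `N_k = ν_0 ⋯ ν_k`. -/
def IsWeightSeqQ (ν : ℕ → ℝ) : Prop :=
  ν 0 = 1 ∧ Monotone ν ∧ (∀ k, 0 < ν k) ∧
    Filter.Tendsto (fun k : ℕ => (prodSeq ν k) ^ (1 / (k : ℝ))) Filter.atTop Filter.atTop

/-- An admissible weight matrix, given as the set of quotient sequences `ν` of its weight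
sequences `N` (Definition 4.6). -/
def IsAdmissible (𝔑 : Set (ℕ → ℝ)) : Prop :=
  (∀ ν ∈ 𝔑, IsWeightSeqQ ν) ∧
  -- totally ordered under the pointwise order of the weight sequences
  (∀ ν ∈ 𝔑, ∀ ν' ∈ 𝔑,
    (∀ k, prodSeq ν k ≤ prodSeq ν' k) ∨ (∀ k, prodSeq ν' k ≤ prodSeq ν k)) ∧
  -- (1) for all N, Ṅ ∈ 𝔑: ν ≲ ν̇ or ν̇ ≲ ν
  (∀ ν ∈ 𝔑, ∀ ν' ∈ 𝔑,
    (∃ C > 0, ∀ k, ν k ≤ C * ν' k) ∨ (∃ C > 0, ∀ k, ν' k ≤ C * ν k)) ∧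
  -- (2) non-quasianalyticity
  (∀ ν ∈ 𝔑, Summable fun k => 1 / ν k) ∧
  -- (3) condition (4.3)
  (∀ ν ∈ 𝔑, ∃ C > 0, ∀ k : ℕ,
    ν (k + 1) / ν k ≤ (C + 1) + C * (ν (k + 1) / ((k : ℝ) + 1)) * tailSum ν (k + 1)) ∧
  -- (4) ν_k ≲ Ṅ_k^{1/k}
  (∀ ν ∈ 𝔑, ∃ ν' ∈ 𝔑, ∃ C > 0, ∀ k : ℕ, 1 ≤ k → ν k ≤ C * (prodSeq ν' k) ^ (1 / (k : ℝ))) ∧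
  -- (5) ν_{2k} ≲ ν̇_k
  (∀ ν ∈ 𝔑, ∃ ν' ∈ 𝔑, ∃ C > 0, ∀ k : ℕ, ν (2 * k) ≤ C * ν' k)

/-- The finite set of multi-indices `α ∈ ℕ^n` with `|α| ≤ p`. -/
noncomputable def midx (n p : ℕ) : Finset (Fin n → ℕ) :=
  (Fintype.piFinset fun _ : Fin n => Finset.range (p + 1)).filter (fun α => ∑ i, α i ≤ p)

/-- The Taylor polynomial `T_a^p F (x) = ∑_{|α| ≤ p} (x-a)^α F^α(a) / α!` of a jet `F`. -/
noncomputable def Tpoly {n : ℕ} (F : (Fin n → ℕ) → EuclideanSpace ℝ (Fin n) → ℝ)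
    (a : EuclideanSpace ℝ (Fin n)) (p : ℕ) : EuclideanSpace ℝ (Fin n) → ℝ :=
  fun x => ∑ α ∈ midx n p, (∏ i, (x i - a i) ^ (α i) / (Nat.factorial (α i) : ℝ)) * F α a

/-- The Whitney remainder `(R_a^p F)^α(x) = F^α(x) − ∑_{|β| ≤ p-|α|} (x-a)^β F^{α+β}(a)/β!`. -/
noncomputable def Rrem {n : ℕ} (F : (Fin n → ℕ) → EuclideanSpace ℝ (Fin n) → ℝ)
    (a : EuclideanSpace ℝ (Fin n)) (p : ℕ) (α : Fin n → ℕ)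
    (x : EuclideanSpace ℝ (Fin n)) : ℝ :=
  F α x - ∑ β ∈ midx n (p - ∑ i, α i),
    (∏ i, (x i - a i) ^ (β i) / (Nat.factorial (β i) : ℝ)) * F (α + β) a

/-- The partial derivative `∂_i f` of a function on `ℝ^n`. -/
noncomputable def pderivE {n : ℕ} (i : Fin n) (f : EuclideanSpace ℝ (Fin n) → ℝ) :
    EuclideanSpace ℝ (Fin n) → ℝ :=
  fun x => fderiv ℝ f x (EuclideanSpace.single i 1)

/-- The partial derivative `∂^β f` of a function on `ℝ^n` for a multi-index `β`. -/
noncomputable def pderivMulti {n : ℕ} (β : Fin n → ℕ) (f : EuclideanSpace ℝ (Fin n) → ℝ) :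
    EuclideanSpace ℝ (Fin n) → ℝ :=
  (List.finRange n).foldr (fun i g => (pderivE i)^[β i] g) f

/-- `F` is a Whitney jet of class `B^{M}` on `E` (Definition 3.3). -/
def IsWhitneyJet {n : ℕ} (M : ℕ → ℝ) (E : Set (EuclideanSpace ℝ (Fin n)))
    (F : (Fin n → ℕ) → EuclideanSpace ℝ (Fin n) → ℝ) : Prop :=
  (∀ α, ContinuousOn (F α) E) ∧
  ∃ C > 0, ∃ ρ > 0,
    (∀ α : Fin n → ℕ, ∀ a ∈ E, |F α a| ≤ C * ρ ^ (∑ i, α i) * M (∑ i, α i)) ∧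
    (∀ p : ℕ, ∀ α : Fin n → ℕ, ∑ i, α i ≤ p → ∀ a ∈ E, ∀ b ∈ E,
      |Rrem F a p α b| ≤ C * ρ ^ (p + 1) * M (p + 1) *
        ‖b - a‖ ^ (p + 1 - ∑ i, α i) / (Nat.factorial (p + 1 - ∑ i, α i) : ℝ))

/-- `f ∈ B^{M}(ℝ^n)`: `f` is smooth with global derivative bounds `C ρ^{|α|} M_{|α|}`. -/
def MemBM {n : ℕ} (M : ℕ → ℝ) (f : EuclideanSpace ℝ (Fin n) → ℝ) : Prop :=
  ContDiff ℝ (⊤ : ℕ∞) f ∧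
  ∃ C > 0, ∃ ρ > 0, ∀ α : Fin n → ℕ, ∀ x : EuclideanSpace ℝ (Fin n),
    |pderivMulti α f x| ≤ C * ρ ^ (∑ i, α i) * M (∑ i, α i)

/-! ### The sequences `τ`, `σ` and their products -/

/-- The properties of a quotient sequence of an admissible weight matrix that are used below:
normalisation, monotonicity, positivity and non-quasianalyticity. -/
structure GoodSeq (ν : ℕ → ℝ) : Prop where
  zero : ν 0 = 1
  mono : Monotone ν
  pos : ∀ k, 0 < ν k
  summ : Summable fun k => 1 / ν k

lemma one_le_prod_of_one_le {q : ℕ} {f : ℕ → ℝ} (hf : ∀ j ∈ Finset.range q, 1 ≤ f j) :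
    1 ≤ ∏ j ∈ Finset.range q, f j := by
  simpa using Finset.prod_le_prod (s := Finset.range q) (f := fun _ => (1 : ℝ))
    (fun _ _ => zero_le_one) hf

namespace GoodSeq

variable {ν : ℕ → ℝ}

lemma summ_shift (h : GoodSeq ν) (k : ℕ) : Summable fun i => 1 / ν (i + k) :=
  (summable_nat_add_iff (f := fun j => 1 / ν j) k).2 h.summ

lemma tail_pos (h : GoodSeq ν) (k : ℕ) : 0 < tailSum ν k :=
  (h.summ_shift k).tsum_pos (fun _ => (one_div_pos.2 (h.pos _)).le) 0 (one_div_pos.2 (h.pos _))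

lemma tail_succ (h : GoodSeq ν) (k : ℕ) : tailSum ν k = 1 / ν k + tailSum ν (k + 1) := by
  unfold tailSum
  rw [(h.summ_shift k).tsum_eq_zero_add]
  simp [add_comm, add_left_comm]

lemma tau_ge (h : GoodSeq ν) (k : ℕ) : (k : ℝ) / ν k ≤ tauSeq ν k := by
  have := h.tail_pos k
  unfold tauSeq; linarith

lemma tail_le_tau (h : GoodSeq ν) (k : ℕ) : tailSum ν k ≤ tauSeq ν k := by
  have := h.pos k
  have : 0 ≤ (k : ℝ) / ν k := by positivity
  unfold tauSeq; linarith

lemma tau_pos (h : GoodSeq ν) (k : ℕ) : 0 < tauSeq ν k :=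
  (h.tail_pos k).trans_le (h.tail_le_tau k)

lemma tau_eq (h : GoodSeq ν) (k : ℕ) :
    tauSeq ν k = ((k : ℝ) + 1) / ν k + tailSum ν (k + 1) := by
  unfold tauSeq; rw [h.tail_succ k]; ring

lemma tau_anti (h : GoodSeq ν) : Antitone (tauSeq ν) := by
  refine antitone_nat_of_succ_le fun k => ?_
  rw [h.tau_eq k]
  unfold tauSeq
  have := h.pos k
  have : ((k + 1 : ℕ) : ℝ) / ν (k + 1) ≤ ((k : ℝ) + 1) / ν k := by
    push_cast
    exact div_le_div_of_nonneg_left (by positivity) this (h.mono (Nat.le_succ k))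
  linarith

lemma prodSeq_succ (k : ℕ) : prodSeq ν (k + 1) = prodSeq ν k * ν (k + 1) :=
  Finset.prod_range_succ _ _

lemma prodSeq_zero (h : GoodSeq ν) : prodSeq ν 0 = 1 := by simp [prodSeq, h.zero]

lemma prodSeq_pos (h : GoodSeq ν) (k : ℕ) : 0 < prodSeq ν k :=
  Finset.prod_pos fun i _ => h.pos i

lemma prodSeq_mul_le (h : GoodSeq ν) (j k : ℕ) :
    prodSeq ν j * prodSeq ν k ≤ prodSeq ν (j + k) := by
  induction k with
  | zero => simp [h.prodSeq_zero]
  | succ k ih =>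
    rw [← add_assoc, prodSeq_succ, prodSeq_succ, ← mul_assoc]
    exact mul_le_mul ih (h.mono (by omega)) (h.pos _).le (h.prodSeq_pos _).le

/-- The products `P_q = ∏_{j ≤ q} τ_j / τ_q`; the reciprocal of `P_q` is the value at
`τ_q / τ_1` of the function `h_s(t) = inf_k s_k t^k` attached to `s_k = S_k / k!`. -/
noncomputable def P (ν : ℕ → ℝ) (q : ℕ) : ℝ :=
  ∏ j ∈ Finset.range q, (tauSeq ν (j + 1) / tauSeq ν q)

lemma one_le_P (h : GoodSeq ν) (q : ℕ) : 1 ≤ P ν q := by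
  refine one_le_prod_of_one_le fun j hj => ?_
  rw [one_le_div (h.tau_pos _)]
  exact h.tau_anti (by simpa using hj)

lemma P_pos (h : GoodSeq ν) (q : ℕ) : 0 < P ν q := one_pos.trans_le (h.one_le_P q)

/-- The partial products of `τ_j / τ_q` are largest at `q`, since the factors are `≥ 1` up to
the index `q` and `≤ 1` afterwards. -/
lemma prod_le_P (h : GoodSeq ν) (q k : ℕ) :
    ∏ j ∈ Finset.range k, (tauSeq ν (j + 1) / tauSeq ν q) ≤ P ν q := by
  have hnn : ∀ j, 0 ≤ tauSeq ν (j + 1) / tauSeq ν q := fun j =>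
    (div_pos (h.tau_pos _) (h.tau_pos _)).le
  rcases le_total k q with hkq | hkq
  · obtain ⟨d, rfl⟩ := Nat.exists_eq_add_of_le hkq
    unfold P
    rw [Finset.prod_range_add]
    refine le_mul_of_one_le_right (Finset.prod_nonneg fun j _ => hnn j) ?_
    refine one_le_prod_of_one_le fun j hj => ?_
    rw [one_le_div (h.tau_pos _)]
    exact h.tau_anti (by have := Finset.mem_range.1 hj; omega)
  · obtain ⟨d, rfl⟩ := Nat.exists_eq_add_of_le hkq
    unfold P
    rw [Finset.prod_range_add]
    refine mul_le_of_le_one_right (Finset.prod_nonneg fun j _ => hnn j) ?_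
    refine Finset.prod_le_one (fun j _ => hnn _) fun j hj => ?_
    rw [div_le_one (h.tau_pos _)]
    exact h.tau_anti (by omega)

lemma factorial_le_prod (h : GoodSeq ν) (k : ℕ) :
    (k.factorial : ℝ) ≤ prodSeq ν k * ∏ j ∈ Finset.range k, tauSeq ν (j + 1) := by
  induction k with
  | zero => simp [h.prodSeq_zero]
  | succ k ih =>
    rw [prodSeq_succ, Finset.prod_range_succ, Nat.factorial_succ]
    have h1 : ((k + 1 : ℕ) : ℝ) ≤ ν (k + 1) * tauSeq ν (k + 1) := by
      have := h.tau_ge (k + 1)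
      rwa [div_le_iff₀' (h.pos _)] at this
    push_cast at h1 ⊢
    calc ((k : ℝ) + 1) * k.factorial
        ≤ (ν (k + 1) * tauSeq ν (k + 1)) *
          (prodSeq ν k * ∏ j ∈ Finset.range k, tauSeq ν (j + 1)) :=
          mul_le_mul h1 ih (by positivity) (le_trans (by positivity) h1)
      _ = _ := by ring

/-- The basic link between the descendant and the weight sequence: `k! τ_q^{-k} ≤ N_k P_q`
for *all* `k` and `q`. -/
lemma factorial_le (h : GoodSeq ν) (q k : ℕ) :
    (k.factorial : ℝ) ≤ tauSeq ν q ^ k * prodSeq ν k * P ν q := by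
  have h1 := h.factorial_le_prod k
  have h2 := h.prod_le_P q k
  rw [Finset.prod_div_distrib, Finset.prod_const, Finset.card_range,
    div_le_iff₀ (pow_pos (h.tau_pos q) k)] at h2
  calc _ ≤ _ := h1
    _ ≤ prodSeq ν k * (P ν q * tauSeq ν q ^ k) :=
      mul_le_mul_of_nonneg_left h2 (h.prodSeq_pos k).le
    _ = _ := by ring

lemma pow_le (h : GoodSeq ν) (q k : ℕ) :
    (q : ℝ) ^ k ≤ tauSeq ν q ^ k * prodSeq ν k * (Real.exp 1 ^ q * P ν q) := by
  have h1 := Real.pow_div_factorial_le_exp q (by positivity) k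
  rw [div_le_iff₀ (by positivity)] at h1
  have h2 : Real.exp q = Real.exp 1 ^ q := by rw [← Real.exp_nat_mul, mul_one]
  rw [h2] at h1
  refine h1.trans ?_
  have := mul_le_mul_of_nonneg_left (h.factorial_le q k) (by positivity : 0 ≤ Real.exp 1 ^ q)
  linarith

/-- Condition (3) on a weight matrix says that `τ_k ≲ τ_{k+1}`. -/
lemma tau_le_succ (h : GoodSeq ν) {C : ℝ}
    (h3 : ∀ k : ℕ, ν (k + 1) / ν k ≤
      (C + 1) + C * (ν (k + 1) / ((k : ℝ) + 1)) * tailSum ν (k + 1)) (k : ℕ) :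
    tauSeq ν k ≤ (C + 1) * tauSeq ν (k + 1) := by
  rw [h.tau_eq k]
  unfold tauSeq
  have h0 := h.pos k
  have h1 := h.pos (k + 1)
  have hk : (0 : ℝ) < (k : ℝ) + 1 := by positivity
  have := mul_le_mul_of_nonneg_left (h3 k) (by positivity : 0 ≤ ((k : ℝ) + 1) / ν (k + 1))
  have e1 : ((k : ℝ) + 1) / ν (k + 1) * (ν (k + 1) / ν k) = ((k : ℝ) + 1) / ν k := by
    field_simp
  have e2 : ((k : ℝ) + 1) / ν (k + 1) *
      (C + 1 + C * (ν (k + 1) / ((k : ℝ) + 1)) * tailSum ν (k + 1)) =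
      (C + 1) * (((k : ℝ) + 1) / ν (k + 1)) + C * tailSum ν (k + 1) := by
    field_simp
  rw [e1, e2] at this
  push_cast
  linarith

lemma P_succ_le (h : GoodSeq ν) {B : ℝ} (hB : ∀ k, tauSeq ν k ≤ B * tauSeq ν (k + 1)) (q : ℕ) :
    P ν (q + 1) ≤ B ^ q * P ν q := by
  unfold P
  rw [Finset.prod_range_succ, div_self (h.tau_pos _).ne', mul_one]
  have : B ^ q = ∏ _j ∈ Finset.range q, B := by simp
  rw [this, ← Finset.prod_mul_distrib]
  refine Finset.prod_le_prod (fun j _ => (div_pos (h.tau_pos _) (h.tau_pos _)).le) fun j _ => ?_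
  rw [← mul_div_assoc, div_le_div_iff₀ (h.tau_pos _) (h.tau_pos _)]
  calc _ ≤ tauSeq ν (j + 1) * (B * tauSeq ν (q + 1)) :=
        mul_le_mul_of_nonneg_left (hB q) (h.tau_pos _).le
    _ = _ := by ring

/-- If `ν_{Kk} ≲ ν'_k`, then `τ'_q ≲ τ_{Kq}`. -/
lemma tau_le_tau_mul (h : GoodSeq ν) {ν' : ℕ → ℝ} (h' : GoodSeq ν') {K : ℕ} (hK : 0 < K) {C : ℝ}
    (hC : 0 < C) (hle : ∀ k, ν (K * k) ≤ C * ν' k) (q : ℕ) :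
    tauSeq ν' q ≤ C * tauSeq ν (K * q) := by
  have hinv : ∀ k, 1 / ν' k ≤ C * (1 / ν (K * k)) := fun k => by
    rw [mul_one_div, div_le_div_iff₀ (h'.pos _) (h.pos _)]
    linarith [hle k]
  have hinj : Function.Injective fun i : ℕ => K * i := fun a b hab =>
    Nat.eq_of_mul_eq_mul_left hK hab
  have hsum : Summable fun i => 1 / ν (K * (i + q)) := by
    have := (h.summ_shift (K * q)).comp_injective hinj
    refine this.congr fun i => ?_
    simp [mul_add]
  have htail : tailSum ν' q ≤ C * tailSum ν (K * q) := by
    calc tailSum ν' q ≤ ∑' i, C * (1 / ν (K * (i + q))) :=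
          (h'.summ_shift q).tsum_le_tsum (fun i => hinv _) (hsum.mul_left C)
      _ = C * ∑' i, 1 / ν (K * (i + q)) := tsum_mul_left
      _ ≤ C * tailSum ν (K * q) := by
          refine mul_le_mul_of_nonneg_left ?_ hC.le
          refine Summable.tsum_le_tsum_of_inj (fun i : ℕ => K * i) hinj
            (fun c _ => (one_div_pos.2 (h.pos _)).le) (fun i => ?_) hsum (h.summ_shift _)
          simp [mul_add]
  have hmain : (q : ℝ) / ν' q ≤ C * (((K * q : ℕ) : ℝ) / ν (K * q)) := by
    have h1 := mul_le_mul_of_nonneg_left (hinv q) (Nat.cast_nonneg (α := ℝ) q)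
    have h2 : (q : ℝ) ≤ ((K * q : ℕ) : ℝ) := by
      exact_mod_cast Nat.le_mul_of_pos_left q hK
    have h3 : C * ((q : ℝ) / ν (K * q)) ≤ C * (((K * q : ℕ) : ℝ) / ν (K * q)) :=
      mul_le_mul_of_nonneg_left (div_le_div_of_nonneg_right h2 (h.pos _).le) hC.le
    calc (q : ℝ) / ν' q = q * (1 / ν' q) := by ring
      _ ≤ q * (C * (1 / ν (K * q))) := h1
      _ = C * ((q : ℝ) / ν (K * q)) := by ring
      _ ≤ _ := h3
  unfold tauSeq
  linarith

/-- A product over `Kq` indices of the descendant is controlled by the `K`-th power of a product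
over `q` indices. -/
lemma prod_inv_tau_le (h : GoodSeq ν) {ν' : ℕ → ℝ} (h' : GoodSeq ν') {K : ℕ} {C : ℝ}
    (hle : ∀ q, tauSeq ν' q ≤ C * tauSeq ν (K * q)) (q : ℕ) :
    ∏ j ∈ Finset.range (K * q), (1 / tauSeq ν (j + 1)) ≤
      (∏ i ∈ Finset.range q, (C / tauSeq ν' (i + 1))) ^ K := by
  induction q with
  | zero => simp
  | succ q ih =>
    rw [mul_add_one, Finset.prod_range_add, Finset.prod_range_succ, mul_pow]
    have hp : ∀ j, 0 ≤ 1 / tauSeq ν (j + 1) := fun j => (one_div_pos.2 (h.tau_pos _)).le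
    refine mul_le_mul ih ?_ (Finset.prod_nonneg fun j _ => hp _)
      ((Finset.prod_nonneg fun j _ => hp _).trans ih)
    calc ∏ j ∈ Finset.range K, (1 / tauSeq ν (K * q + j + 1))
        ≤ ∏ _j ∈ Finset.range K, (C / tauSeq ν' (q + 1)) := by
          refine Finset.prod_le_prod (fun j _ => hp _) fun j hj => ?_
          rw [div_le_div_iff₀ (h.tau_pos _) (h'.tau_pos _), one_mul]
          have hC : 0 < C := by
            by_contra hC
            have h1 := hle (q + 1)
            have h2 := mul_nonneg_of_nonpos_of_nonpos (not_lt.1 hC)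
              (neg_nonpos.2 (h.tau_pos (K * (q + 1))).le)
            have h3 := h'.tau_pos (q + 1)
            linarith
          refine (hle (q + 1)).trans (mul_le_mul_of_nonneg_left (h.tau_anti ?_) hC.le)
          have := Finset.mem_range.1 hj
          rw [mul_add_one]; omega
      _ = _ := by rw [Finset.prod_const, Finset.card_range]

lemma prodSeq_sigma (h : GoodSeq ν) (k : ℕ) :
    prodSeq (sigmaSeq ν) k =
      k.factorial * (tauSeq ν 1 ^ k * ∏ j ∈ Finset.range k, (1 / tauSeq ν (j + 1))) := by
  have := h.zero
  induction k with
  | zero => simp [prodSeq, sigmaSeq]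
  | succ k ih =>
    rw [prodSeq_succ, ih, Finset.prod_range_succ, Nat.factorial_succ]
    simp only [sigmaSeq]
    push_cast
    ring

end GoodSeq

/-- Iterating condition (5) of a weight matrix. -/
lemma exists_dilate {𝔑 : Set (ℕ → ℝ)}
    (h5 : ∀ ν ∈ 𝔑, ∃ ν' ∈ 𝔑, ∃ C > 0, ∀ k : ℕ, ν (2 * k) ≤ C * ν' k) {ν : ℕ → ℝ} (hν : ν ∈ 𝔑)
    (m : ℕ) : ∃ ν' ∈ 𝔑, ∃ C > 0, ∀ k : ℕ, ν (2 ^ m * k) ≤ C * ν' k := by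
  induction m with
  | zero => exact ⟨ν, hν, 1, one_pos, fun k => by simp⟩
  | succ m ih =>
    obtain ⟨ν₁, h₁, C₁, hC₁, hle₁⟩ := ih
    obtain ⟨ν₂, h₂, C₂, hC₂, hle₂⟩ := h5 ν₁ h₁
    refine ⟨ν₂, h₂, C₁ * C₂, mul_pos hC₁ hC₂, fun k => ?_⟩
    calc ν (2 ^ (m + 1) * k) = ν (2 ^ m * (2 * k)) := by rw [pow_succ, mul_assoc]
      _ ≤ C₁ * ν₁ (2 * k) := hle₁ _
      _ ≤ C₁ * (C₂ * ν₂ k) := mul_le_mul_of_nonneg_left (hle₂ k) hC₁.le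
      _ = _ := by ring

/-! ### Smooth steps with controlled derivatives of all orders -/

/-- The average of `f` over `[x - a, x]`, i.e. the convolution of `f` with the normalised
indicator function of `[0, a]`. -/
noncomputable def avg (a : ℝ) (f : ℝ → ℝ) (x : ℝ) : ℝ := (∫ t in (x - a)..x, f t) / a

lemma avg_hasDerivAt {a : ℝ} {f : ℝ → ℝ} (hf : Continuous f) (x : ℝ) :
    HasDerivAt (avg a f) ((f x - f (x - a)) / a) x := by
  have hi : ∀ u v, IntervalIntegrable f MeasureTheory.volume u v := fun u v =>
    hf.intervalIntegrable u v
  have h0 : ∀ y, HasDerivAt (fun z => ∫ t in (0 : ℝ)..z, f t) (f y) y := fun y =>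
    intervalIntegral.integral_hasDerivAt_right (hi _ _)
      hf.stronglyMeasurable.stronglyMeasurableAtFilter hf.continuousAt
  have h1 : avg a f = fun y => ((∫ t in (0 : ℝ)..y, f t) - ∫ t in (0 : ℝ)..(y - a), f t) / a := by
    funext y
    rw [intervalIntegral.integral_interval_sub_left (hi _ _) (hi _ _)]
    rfl
  rw [h1]
  have h2 : HasDerivAt (fun y => ∫ t in (0 : ℝ)..(y - a), f t) (f (x - a)) x := by
    simpa using (h0 (x - a)).comp_sub_const x a
  exact ((h0 x).sub h2).div_const a

lemma avg_contDiff {a : ℝ} {f : ℝ → ℝ} (hf : ContDiff ℝ (⊤ : ℕ∞) f) :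
    ContDiff ℝ (⊤ : ℕ∞) (avg a f) := by
  rw [contDiff_infty_iff_deriv]
  refine ⟨fun x => (avg_hasDerivAt hf.continuous x).differentiableAt, ?_⟩
  rw [funext fun x => (avg_hasDerivAt (a := a) hf.continuous x).deriv]
  exact (hf.sub (hf.comp (contDiff_id.sub contDiff_const))).div_const a

lemma iteratedDeriv_contDiff {f : ℝ → ℝ} (hf : ContDiff ℝ (⊤ : ℕ∞) f) (k : ℕ) :
    ContDiff ℝ (⊤ : ℕ∞) (iteratedDeriv k f) := by
  rw [iteratedDeriv_eq_iterate]
  exact hf.iterate_deriv k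

lemma deriv_avg {a : ℝ} {f : ℝ → ℝ} (hf : ContDiff ℝ (⊤ : ℕ∞) f) :
    deriv (avg a f) = avg a (deriv f) := by
  funext x
  rw [(avg_hasDerivAt hf.continuous x).deriv, avg, intervalIntegral.integral_deriv_eq_sub]
  · exact fun y _ => (hf.differentiable (by simp)) y
  · exact (contDiff_infty_iff_deriv.1 hf).2.continuous.intervalIntegrable _ _

lemma iteratedDeriv_avg {a : ℝ} {f : ℝ → ℝ} (hf : ContDiff ℝ (⊤ : ℕ∞) f) (k : ℕ) :
    iteratedDeriv k (avg a f) = avg a (iteratedDeriv k f) := by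
  induction k with
  | zero => simp
  | succ k ih => rw [iteratedDeriv_succ, ih, deriv_avg (iteratedDeriv_contDiff hf k),
      ← iteratedDeriv_succ]

lemma abs_avg_le {a : ℝ} (ha : 0 < a) {f : ℝ → ℝ} {C : ℝ} (hC : ∀ x, |f x| ≤ C) (x : ℝ) :
    |avg a f x| ≤ C := by
  have := intervalIntegral.norm_integral_le_of_norm_le_const (a := x - a) (b := x) (f := f)
    (C := C) (fun t _ => hC t)
  rw [avg, abs_div, abs_of_pos ha, div_le_iff₀ ha]
  simpa [abs_of_pos ha] using this

lemma abs_avg_sub_le {a : ℝ} (ha : 0 < a) {f : ℝ → ℝ} (hf : ContDiff ℝ (⊤ : ℕ∞) f) {C : ℝ}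
    (hC : ∀ x, |deriv f x| ≤ C) (x : ℝ) : |avg a f x - f x| ≤ a * C := by
  have hlip : ∀ t ∈ Set.uIoc (x - a) x, ‖f t - f x‖ ≤ a * C := by
    intro t ht
    rw [Set.uIoc_of_le (by linarith)] at ht
    have := Convex.norm_image_sub_le_of_norm_deriv_le (f := f) (s := Set.univ) (C := C) (x := x)
      (y := t) (fun y _ => (hf.differentiable (by simp)) y) (fun y _ => hC y) convex_univ
      trivial trivial
    refine this.trans ?_
    rw [mul_comm]
    refine mul_le_mul_of_nonneg_right ?_ ((abs_nonneg _).trans (hC 0))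
    rw [Real.norm_eq_abs, abs_le]
    constructor <;> linarith [ht.1, ht.2]
  have h1 := intervalIntegral.norm_integral_le_of_norm_le_const hlip
  have h2 : avg a f x - f x = (∫ t in (x - a)..x, (f t - f x)) / a := by
    rw [intervalIntegral.integral_sub (hf.continuous.intervalIntegrable _ _) (by simp)]
    simp [avg]
    field_simp
  rw [h2, abs_div, abs_of_pos ha, div_le_iff₀ ha]
  simpa [abs_of_pos ha] using h1

/-- The function `f`, averaged successively over the lengths `a 0, …, a (j - 1)`. -/
noncomputable def avgSeq (a : ℕ → ℝ) (f : ℝ → ℝ) : ℕ → ℝ → ℝ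
  | 0 => f
  | j + 1 => avg (a j) (avgSeq a f j)

lemma avgSeq_contDiff {a : ℕ → ℝ} {f : ℝ → ℝ} (hf : ContDiff ℝ (⊤ : ℕ∞) f) (j : ℕ) :
    ContDiff ℝ (⊤ : ℕ∞) (avgSeq a f j) := by
  induction j with
  | zero => exact hf
  | succ j ih => exact avg_contDiff ih

lemma abs_iteratedDeriv_avgSeq_le_init {a : ℕ → ℝ} (ha : ∀ j, 0 < a j) {f : ℝ → ℝ}
    (hf : ContDiff ℝ (⊤ : ℕ∞) f) {k : ℕ} {C : ℝ} (hC : ∀ x, |iteratedDeriv k f x| ≤ C) (j : ℕ) :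
    ∀ x, |iteratedDeriv k (avgSeq a f j) x| ≤ C := by
  induction j with
  | zero => exact hC
  | succ j ih =>
    intro x
    simp only [avgSeq]
    rw [iteratedDeriv_avg (avgSeq_contDiff hf j)]
    exact abs_avg_le (ha j) ih x

/-- For `k ≤ j` the `k`-th derivative falls on `k` different averagings, the `i`-th of which
costs a factor `2 / a i`. -/
lemma abs_iteratedDeriv_avgSeq_le {a : ℕ → ℝ} (ha : ∀ j, 0 < a j) {f : ℝ → ℝ}
    (hf : ContDiff ℝ (⊤ : ℕ∞) f) (hf1 : ∀ x, |f x| ≤ 1) (j : ℕ) :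
    ∀ k ≤ j, ∀ x, |iteratedDeriv k (avgSeq a f j) x| ≤ ∏ i ∈ Finset.range k, (2 / a i) := by
  induction j with
  | zero =>
    intro k hk x
    obtain rfl : k = 0 := by omega
    simpa [avgSeq] using hf1 x
  | succ j ih =>
    intro k hk x
    simp only [avgSeq]
    rcases Nat.lt_or_ge k (j + 1) with hkj | hkj
    · rw [iteratedDeriv_avg (avgSeq_contDiff hf j)]
      exact abs_avg_le (ha j) (ih k (by omega)) x
    · obtain rfl : k = j + 1 := by omega
      have hs := iteratedDeriv_contDiff (avgSeq_contDiff (a := a) hf j) j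
      rw [iteratedDeriv_succ, iteratedDeriv_avg (avgSeq_contDiff hf j),
        (avg_hasDerivAt hs.continuous x).deriv, Finset.prod_range_succ, abs_div,
        abs_of_pos (ha j), div_le_iff₀ (ha j), mul_assoc, div_mul_cancel₀ _ (ha j).ne']
      have h1 := ih j le_rfl x
      have h2 := ih j le_rfl (x - a j)
      have h3 := abs_sub (iteratedDeriv j (avgSeq a f j) x)
        (iteratedDeriv j (avgSeq a f j) (x - a j))
      linarith

lemma avgSeq_eq_zero {a : ℕ → ℝ} (ha : ∀ j, 0 < a j) {f : ℝ → ℝ} (hf : ∀ x ≤ 0, f x = 0)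
    (j : ℕ) : ∀ x ≤ 0, avgSeq a f j x = 0 := by
  induction j with
  | zero => exact hf
  | succ j ih =>
    intro x hx
    have : ∫ t in (x - a j)..x, avgSeq a f j t = ∫ t in (x - a j)..x, (0 : ℝ) := by
      refine intervalIntegral.integral_congr fun t ht => ih t ?_
      rw [Set.uIcc_of_le (by linarith [ha j])] at ht
      exact ht.2.trans hx
    simp [avgSeq, avg, this]

lemma avgSeq_eq_one {a : ℕ → ℝ} (ha : ∀ j, 0 < a j) {f : ℝ → ℝ} {b : ℝ}
    (hf : ∀ x, b ≤ x → f x = 1) (j : ℕ) :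
    ∀ x, b + ∑ i ∈ Finset.range j, a i ≤ x → avgSeq a f j x = 1 := by
  induction j with
  | zero => simpa [avgSeq] using hf
  | succ j ih =>
    intro x hx
    rw [Finset.sum_range_succ] at hx
    have : ∫ t in (x - a j)..x, avgSeq a f j t = ∫ t in (x - a j)..x, (1 : ℝ) := by
      refine intervalIntegral.integral_congr fun t ht => ih t ?_
      rw [Set.uIcc_of_le (by linarith [ha j])] at ht
      linarith [ht.1]
    simp [avgSeq, avg, this, (ha j).ne']

/-- The derivatives of a smooth function that is `0` on `(-∞, 0]` and `1` on `[b, ∞)` are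
bounded. -/
lemma exists_bound_step {f : ℝ → ℝ} (hf : ContDiff ℝ (⊤ : ℕ∞) f) {b : ℝ}
    (h0 : ∀ x ≤ 0, f x = 0) (h1 : ∀ x, b ≤ x → f x = 1) (k : ℕ) :
    ∃ C, ∀ x, |iteratedDeriv k f x| ≤ C := by
  obtain ⟨C, hC⟩ := (isCompact_Icc (a := (0 : ℝ)) (b := b)).exists_bound_of_continuousOn
    (iteratedDeriv_contDiff hf k).continuous.continuousOn
  have hconst : ∀ c : ℝ, |c| ≤ 1 → ∀ x, f =ᶠ[nhds x] (fun _ => c) → |iteratedDeriv k f x| ≤ 1 := by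
    intro c hc x hx
    have h2 : iteratedDeriv k f x = iteratedDeriv k (fun _ => c) x := by
      simp only [iteratedDeriv]
      rw [(hx.iteratedFDeriv ℝ k).eq_of_nhds]
    rw [h2, iteratedDeriv_const]
    split_ifs <;> simp [hc]
  refine ⟨max C 1, fun x => ?_⟩
  rcases lt_or_ge x 0 with hx | hx
  · exact (hconst 0 (by simp) x (by
      filter_upwards [Iio_mem_nhds hx] with y hy using h0 y (le_of_lt hy))).trans (le_max_right _ _)
  rcases lt_or_ge b x with hx' | hx'
  · exact (hconst 1 (by simp) x (by
      filter_upwards [Ioi_mem_nhds hx'] with y hy using h1 y (le_of_lt hy))).trans (le_max_right _ _)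
  · exact (hC x ⟨hx, hx'⟩).trans (le_max_left _ _)

/-- The infinite convolution of normalised indicator functions of intervals of lengths `a 0, a 1, …`
with a smooth step. -/
lemma exists_step {a : ℕ → ℝ} (ha : ∀ j, 0 < a j) (hs : Summable a) {b : ℝ} (hb : 0 < b) :
    ∃ Θ : ℝ → ℝ, ContDiff ℝ (⊤ : ℕ∞) Θ ∧ (∀ x ≤ 0, Θ x = 0) ∧
      (∀ x, b + ∑' i, a i ≤ x → Θ x = 1) ∧
      ∀ k x, ‖iteratedFDeriv ℝ k Θ x‖ ≤ ∏ i ∈ Finset.range k, (2 / a i) := by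
  set f : ℝ → ℝ := fun x => Real.smoothTransition (x / b) with hfdef
  have hf : ContDiff ℝ (⊤ : ℕ∞) f :=
    Real.smoothTransition.contDiff.comp (contDiff_id.div_const b)
  have hf0 : ∀ x ≤ 0, f x = 0 := fun x hx =>
    Real.smoothTransition.zero_of_nonpos (div_nonpos_of_nonpos_of_nonneg hx hb.le)
  have hf1 : ∀ x, b ≤ x → f x = 1 := fun x hx =>
    Real.smoothTransition.one_of_one_le ((one_le_div hb).2 hx)
  have hfle : ∀ x, |f x| ≤ 1 := fun x => by
    rw [abs_of_nonneg (Real.smoothTransition.nonneg _)]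
    exact Real.smoothTransition.le_one _
  choose C hC using exists_bound_step hf hf0 hf1
  set F := avgSeq a f with hF
  have hFs : ∀ j, ContDiff ℝ (⊤ : ℕ∞) (F j) := avgSeq_contDiff hf
  set g : ℕ → ℝ → ℝ := fun j x => F (j + 1) x - F j x with hg
  have hgs : ∀ j, ContDiff ℝ (⊤ : ℕ∞) (g j) := fun j => (hFs _).sub (hFs _)
  have hgD : ∀ k j x, iteratedFDeriv ℝ k (g j) x =
      iteratedFDeriv ℝ k (F (j + 1)) x - iteratedFDeriv ℝ k (F j) x := fun k j x =>
    iteratedFDeriv_sub_apply ((hFs _).of_le (by exact_mod_cast le_top)).contDiffAt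
      ((hFs _).of_le (by exact_mod_cast le_top)).contDiffAt
  have hgb : ∀ k j x, ‖iteratedFDeriv ℝ k (g j) x‖ ≤ a j * C (k + 1) := by
    intro k j x
    rw [norm_iteratedFDeriv_eq_norm_iteratedDeriv, iteratedDeriv_eq_iteratedFDeriv, hgD]
    change ‖iteratedDeriv k (F (j + 1)) x - iteratedDeriv k (F j) x‖ ≤ _
    rw [show F (j + 1) = avg (a j) (F j) from rfl, iteratedDeriv_avg (hFs j)]
    refine abs_avg_sub_le (ha j) (iteratedDeriv_contDiff (hFs j) k) (fun y => ?_) x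
    rw [← iteratedDeriv_succ]
    exact abs_iteratedDeriv_avgSeq_le_init ha hf (hC (k + 1)) j y
  have hsum : ∀ k : ℕ, (k : ℕ∞) ≤ ⊤ → Summable fun j => a j * C (k + 1) := fun k _ =>
    hs.mul_right _
  have hlim : ∀ k x, Filter.Tendsto (fun J => iteratedFDeriv ℝ k (F J) x) Filter.atTop
      (nhds (iteratedFDeriv ℝ k f x + iteratedFDeriv ℝ k (fun y => ∑' j, g j y) x)) := by
    intro k x
    rw [iteratedFDeriv_tsum_apply (N := ⊤) hgs hsum (fun k i x _ => hgb k i x) le_top x]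
    have h1 : Summable fun j => iteratedFDeriv ℝ k (g j) x :=
      Summable.of_norm_bounded (hsum k le_top) (fun j => hgb k j x)
    refine (h1.hasSum.tendsto_sum_nat.const_add (iteratedFDeriv ℝ k f x)).congr fun J => ?_
    rw [Finset.sum_congr rfl (fun j _ => hgD k j x),
      Finset.sum_range_sub (fun j => iteratedFDeriv ℝ k (F j) x)]
    simp [hF, avgSeq]
  have hts : ContDiff ℝ (⊤ : ℕ∞) fun y => ∑' j, g j y :=
    contDiff_tsum (N := ⊤) hgs hsum (fun k i x _ => hgb k i x)
  have hlim0 : ∀ x, Filter.Tendsto (fun J => F J x) Filter.atTop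
      (nhds (f x + ∑' j, g j x)) := by
    intro x
    have h1 : Summable fun j => g j x := Summable.of_norm_bounded (hsum 0 le_top) fun j => by
      simpa using hgb 0 j x
    refine (h1.hasSum.tendsto_sum_nat.const_add (f x)).congr fun J => ?_
    rw [Finset.sum_range_sub (fun j => F j x)]
    simp [hF, avgSeq]
  refine ⟨fun x => f x + ∑' j, g j x, hf.add hts, fun x hx => ?_, fun x hx => ?_, fun k x => ?_⟩
  · refine tendsto_nhds_unique (hlim0 x) ?_
    exact tendsto_const_nhds.congr fun J => (avgSeq_eq_zero ha hf0 J x hx).symm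
  · refine tendsto_nhds_unique (hlim0 x) ?_
    refine tendsto_const_nhds.congr fun J => (avgSeq_eq_one ha hf1 J x ?_).symm
    have := hs.sum_le_tsum (Finset.range J) (fun i _ => (ha i).le)
    linarith
  · have h1 : iteratedFDeriv ℝ k (fun x => f x + ∑' j, g j x) x =
        iteratedFDeriv ℝ k f x + iteratedFDeriv ℝ k (fun y => ∑' j, g j y) x :=
      iteratedFDeriv_add_apply (hf.of_le (by exact_mod_cast le_top)).contDiffAt
        (hts.of_le (by exact_mod_cast le_top)).contDiffAt
    rw [h1]
    refine le_of_tendsto (hlim k x).norm ?_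
    filter_upwards [Filter.eventually_ge_atTop k] with J hJ
    rw [norm_iteratedFDeriv_eq_norm_iteratedDeriv]
    exact abs_iteratedDeriv_avgSeq_le ha hf hfle J k hJ x

/-- A smooth step of width `3 c τ_q` whose derivatives are controlled by the weight sequence. -/
lemma GoodSeq.exists_step {ν : ℕ → ℝ} (h : GoodSeq ν) {q : ℕ} (hq : 0 < q) {c : ℝ} (hc : 0 < c) :
    ∃ Θ : ℝ → ℝ, ContDiff ℝ (⊤ : ℕ∞) Θ ∧ (∀ x ≤ 0, Θ x = 0) ∧
      (∀ x, 3 * c * tauSeq ν q ≤ x → Θ x = 1) ∧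
      ∀ k x, ‖iteratedFDeriv ℝ k Θ x‖ ≤
        (Real.exp 1 ^ q * GoodSeq.P ν q) * (2 / c) ^ k * prodSeq ν k := by
  have hq' : (0 : ℝ) < q := by exact_mod_cast hq
  -- `q` averagings over the length `τ_q / q`, followed by the lengths `1 / ν_j` for `j > q`
  set a : ℕ → ℝ := fun j => c * if j < q then tauSeq ν q / q else 1 / ν (j + 1) with ha
  have hτ := h.tau_pos q
  have hpos : ∀ j, 0 < a j := by
    intro j
    have := h.pos (j + 1)
    simp only [ha]
    split_ifs <;> positivity
  have hsh : Summable fun j => a (j + q) := by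
    refine ((h.summ_shift (q + 1)).mul_left c).congr fun j => ?_
    simp [ha, add_assoc]
  have hs : Summable a := (summable_nat_add_iff q).1 hsh
  have htot : ∑' j, a j ≤ 2 * c * tauSeq ν q := by
    rw [← hs.sum_add_tsum_nat_add q]
    have h1 : ∑ j ∈ Finset.range q, a j = c * tauSeq ν q := by
      rw [Finset.sum_congr rfl (g := fun _ => c * (tauSeq ν q / q))]
      · simp; field_simp
      · intro j hj; simp [ha, Finset.mem_range.1 hj]
    have h2 : ∑' j, a (j + q) = c * tailSum ν (q + 1) := by
      rw [tailSum, ← tsum_mul_left]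
      refine tsum_congr fun j => ?_
      simp [ha, add_assoc]
    have h3 : tailSum ν (q + 1) ≤ tauSeq ν q :=
      (h.tail_le_tau _).trans (h.tau_anti (Nat.le_succ q))
    rw [h1, h2]
    nlinarith
  obtain ⟨Θ, hΘ, h0, h1, hb⟩ := _root_.exists_step hpos hs (b := c * tauSeq ν q) (by positivity)
  refine ⟨Θ, hΘ, h0, fun x hx => h1 x (by linarith), fun k x => (hb k x).trans ?_⟩
  have key : ∀ k, k ≤ q → ∏ i ∈ Finset.range k, (2 / a i) ≤
      (Real.exp 1 ^ q * GoodSeq.P ν q) * (2 / c) ^ k * prodSeq ν k := by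
    intro k hk
    have e : ∏ i ∈ Finset.range k, (2 / a i) = (2 / c) ^ k * ((q : ℝ) ^ k / tauSeq ν q ^ k) := by
      rw [Finset.prod_congr rfl (g := fun _ => (2 / c) * ((q : ℝ) / tauSeq ν q))]
      · simp [mul_pow, div_pow]
      · intro j hj
        have : j < q := (Finset.mem_range.1 hj).trans_le hk
        simp only [ha, this, if_true]
        field_simp
    rw [e]
    have h2 : (q : ℝ) ^ k / tauSeq ν q ^ k ≤ prodSeq ν k * (Real.exp 1 ^ q * GoodSeq.P ν q) := by
      rw [div_le_iff₀' (by positivity), ← mul_assoc]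
      exact h.pow_le q k
    calc _ ≤ (2 / c) ^ k * (prodSeq ν k * (Real.exp 1 ^ q * GoodSeq.P ν q)) :=
          mul_le_mul_of_nonneg_left h2 (by positivity)
      _ = _ := by ring
  rcases le_total k q with hk | hk
  · exact key k hk
  · induction k, hk using Nat.le_induction with
    | base => exact key q le_rfl
    | succ k hk ih =>
      rw [Finset.prod_range_succ, GoodSeq.prodSeq_succ]
      have e : 2 / a k = 2 / c * ν (k + 1) := by
        have := h.pos (k + 1)
        simp only [ha, not_lt.2 hk, if_false]
        field_simp
      rw [e]
      have hν := h.pos (k + 1)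
      calc _ ≤ ((Real.exp 1 ^ q * GoodSeq.P ν q) * (2 / c) ^ k * prodSeq ν k) *
            (2 / c * ν (k + 1)) := mul_le_mul_of_nonneg_right ih (by positivity)
        _ = _ := by ring

/-! ### Products of functions with prescribed derivative bounds -/

/-- Properties of a sequence of derivative weights that make the Leibniz rule work. -/
structure GoodW (W : ℕ → ℝ) : Prop where
  zero : W 0 = 1
  nonneg : ∀ k, 0 ≤ W k
  mul_le : ∀ j k, W j * W k ≤ W (j + k)

lemma GoodSeq.goodW {ν : ℕ → ℝ} (h : GoodSeq ν) : GoodW (prodSeq ν) :=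
  ⟨h.prodSeq_zero, fun k => (h.prodSeq_pos k).le, h.prodSeq_mul_le⟩

lemma goodW_one : GoodW fun _ => 1 := ⟨rfl, fun _ => zero_le_one, fun _ _ => by simp⟩

section Gb

variable {V : Type*} [NormedAddCommGroup V] [NormedSpace ℝ V]

/-- `f` is smooth and its derivatives at `x` satisfy `‖D^k f(x)‖ ≤ M A^k W_k`. -/
structure Gb (W : ℕ → ℝ) (f : V → ℝ) (x : V) (M A : ℝ) : Prop where
  smooth : ContDiff ℝ (⊤ : ℕ∞) f
  bound : ∀ k, ‖iteratedFDeriv ℝ k f x‖ ≤ M * A ^ k * W k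

lemma smooth_le {f : V → ℝ} (hf : ContDiff ℝ (⊤ : ℕ∞) f) (k : ℕ) : ContDiff ℝ k f :=
  hf.of_le (by exact_mod_cast le_top)

namespace Gb

variable {W : ℕ → ℝ} {f g : V → ℝ} {x : V} {M M' A B : ℝ}

lemma mono (hW : GoodW W) (h : Gb W f x M A) (hM : 0 ≤ M) (hA : 0 ≤ A) (hMM : M ≤ M')
    (hAB : A ≤ B) : Gb W f x M' B :=
  ⟨h.smooth, fun k => (h.bound k).trans <| by
    have := hW.nonneg k
    have hM' := hM.trans hMM
    gcongr⟩

lemma mul (hW : GoodW W) (hf : Gb W f x M A) (hg : Gb W g x M' B) (hM : 0 ≤ M) (hM' : 0 ≤ M')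
    (hA : 0 ≤ A) (hB : 0 ≤ B) : Gb W (fun y => f y * g y) x (M * M') (A + B) := by
  refine ⟨hf.smooth.mul hg.smooth, fun k => ?_⟩
  refine (norm_iteratedFDeriv_mul_le (smooth_le hf.smooth k) (smooth_le hg.smooth k) x
    le_rfl).trans ?_
  rw [add_pow, Finset.mul_sum, Finset.sum_mul]
  refine Finset.sum_le_sum fun i hi => ?_
  have hik : i + (k - i) = k := by have := Finset.mem_range.1 hi; omega
  have hw := hW.mul_le i (k - i)
  rw [hik] at hw
  have := hW.nonneg i
  calc _ ≤ (k.choose i : ℝ) * (M * A ^ i * W i) * (M' * B ^ (k - i) * W (k - i)) := by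
        gcongr
        · exact hf.bound i
        · exact hg.bound (k - i)
    _ = (M * M' * (A ^ i * B ^ (k - i) * k.choose i)) * (W i * W (k - i)) := by ring
    _ ≤ (M * M' * (A ^ i * B ^ (k - i) * k.choose i)) * W k := by gcongr

lemma add (hf : Gb W f x M A) (hg : Gb W g x M' A) :
    Gb W (fun y => f y + g y) x (M + M') A := by
  refine ⟨hf.smooth.add hg.smooth, fun k => ?_⟩
  have : iteratedFDeriv ℝ k (fun y => f y + g y) x =
      iteratedFDeriv ℝ k f x + iteratedFDeriv ℝ k g x :=
    iteratedFDeriv_add_apply (smooth_le hf.smooth k).contDiffAt (smooth_le hg.smooth k).contDiffAt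
  rw [this, add_mul, add_mul]
  exact (norm_add_le _ _).trans (add_le_add (hf.bound k) (hg.bound k))

lemma const_mul (hf : Gb W f x M A) (c : ℝ) : Gb W (fun y => c * f y) x (|c| * M) A := by
  refine ⟨contDiff_const.mul hf.smooth, fun k => ?_⟩
  have : iteratedFDeriv ℝ k (fun y => c * f y) x = c • iteratedFDeriv ℝ k f x :=
    iteratedFDeriv_const_smul_apply (f := f) (a := c) (smooth_le hf.smooth k).contDiffAt
  rw [this, norm_smul, Real.norm_eq_abs, mul_assoc, mul_assoc, ← mul_assoc M]
  exact mul_le_mul_of_nonneg_left (hf.bound k) (abs_nonneg c)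

lemma sub (hf : Gb W f x M A) (hg : Gb W g x M' A) :
    Gb W (fun y => f y - g y) x (M + M') A := by
  simpa [sub_eq_add_neg] using hf.add (hg.const_mul (-1))

lemma zero_of_eventuallyEq (hf : ContDiff ℝ (⊤ : ℕ∞) f) (h : f =ᶠ[nhds x] fun _ => 0) (A : ℝ) :
    Gb W f x 0 A := by
  refine ⟨hf, fun k => ?_⟩
  rw [(h.iteratedFDeriv ℝ k).eq_of_nhds]
  simp [iteratedFDeriv_fun_zero]

lemma sum {ι : Type*} (s : Finset ι) {F : ι → V → ℝ} {m : ι → ℝ}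
    (h : ∀ i ∈ s, Gb W (F i) x (m i) A) : Gb W (fun y => ∑ i ∈ s, F i y) x (∑ i ∈ s, m i) A := by
  classical
  induction s using Finset.induction_on with
  | empty =>
    simp only [Finset.sum_empty]
    exact zero_of_eventuallyEq contDiff_const (Filter.EventuallyEq.refl _ _) A
  | insert i s hi ih =>
    simp only [Finset.sum_insert hi]
    exact (h i (Finset.mem_insert_self i s)).add
      (ih fun j hj => h j (Finset.mem_insert_of_mem hj))

lemma one (hW : GoodW W) : Gb W (fun _ : V => (1 : ℝ)) x 1 0 := by
  refine ⟨contDiff_const, fun k => ?_⟩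
  rcases Nat.eq_zero_or_pos k with rfl | hk
  · simp [hW.zero]
  · rw [iteratedFDeriv_const_of_ne hk.ne']
    simp [hk.ne']

lemma prod (hW : GoodW W) {ι : Type*} (s : Finset ι) {F : ι → V → ℝ} {m b : ι → ℝ}
    (hm : ∀ i ∈ s, 0 ≤ m i) (hb : ∀ i ∈ s, 0 ≤ b i) (h : ∀ i ∈ s, Gb W (F i) x (m i) (b i)) :
    Gb W (fun y => ∏ i ∈ s, F i y) x (∏ i ∈ s, m i) (∑ i ∈ s, b i) := by
  classical
  induction s using Finset.induction_on with
  | empty => simpa using one (x := x) hW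
  | insert i s hi ih =>
    simp only [Finset.prod_insert hi, Finset.sum_insert hi]
    exact (h i (Finset.mem_insert_self i s)).mul hW
      (ih (fun j hj => hm j (Finset.mem_insert_of_mem hj))
        (fun j hj => hb j (Finset.mem_insert_of_mem hj))
        fun j hj => h j (Finset.mem_insert_of_mem hj))
      (hm i (Finset.mem_insert_self i s))
      (Finset.prod_nonneg fun j hj => hm j (Finset.mem_insert_of_mem hj))
      (hb i (Finset.mem_insert_self i s))
      (Finset.sum_nonneg fun j hj => hb j (Finset.mem_insert_of_mem hj))

/-- A finite sum in which at most `r` terms do not vanish near `x`. -/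
lemma sum_of_card {ι : Type*} (s J : Finset ι) {F : ι → V → ℝ} {r : ℕ} (hr : J.card ≤ r)
    (hM : 0 ≤ M) (hs : ∀ i ∈ s, ContDiff ℝ (⊤ : ℕ∞) (F i))
    (hz : ∀ i ∈ s, i ∉ J → F i =ᶠ[nhds x] fun _ => 0) (h : ∀ i ∈ s, i ∈ J → Gb W (F i) x M A)
    (hW : GoodW W) (hA : 0 ≤ A) :
    Gb W (fun y => ∑ i ∈ s, F i y) x (r * M) A := by
  classical
  have h1 : Gb W (fun y => ∑ i ∈ s, F i y) x (∑ i ∈ s, if i ∈ J then M else 0) A := by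
    refine sum s fun i hi => ?_
    split_ifs with hJ
    · exact h i hi hJ
    · exact zero_of_eventuallyEq (hs i hi) (hz i hi hJ) A
  refine h1.mono hW (Finset.sum_nonneg fun i _ => by split_ifs <;> simp [hM]) hA ?_ le_rfl
  rw [← Finset.sum_filter, Finset.sum_const, nsmul_eq_mul]
  refine mul_le_mul_of_nonneg_right ?_ hM
  have : (s.filter (· ∈ J)).card ≤ J.card :=
    Finset.card_le_card fun i hi => (Finset.mem_filter.1 hi).2
  exact_mod_cast this.trans hr

end Gb

end Gb

/-! ### Monomials -/

/-- The normalised monomial `(x - a)^α / α!`. -/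
noncomputable def monom {n : ℕ} (α : Fin n → ℕ) (a x : EuclideanSpace ℝ (Fin n)) : ℝ :=
  ∏ i, (x i - a i) ^ (α i) / (Nat.factorial (α i) : ℝ)

section Monom

variable {n : ℕ}

lemma monom_contDiff (α : Fin n → ℕ) (a : EuclideanSpace ℝ (Fin n)) :
    ContDiff ℝ (⊤ : ℕ∞) (monom α a) := by
  unfold monom
  fun_prop

lemma Gb_coord {a x : EuclideanSpace ℝ (Fin n)} {d : ℝ} (hd : 0 < d) (hx : ‖x - a‖ ≤ d)
    (i : Fin n) : Gb (fun _ => 1) (fun y : EuclideanSpace ℝ (Fin n) => y i - a i) x d (1 / d) := by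
  refine ⟨by fun_prop, fun k => ?_⟩
  have hL : ‖(EuclideanSpace.proj i : EuclideanSpace ℝ (Fin n) →L[ℝ] ℝ)‖ ≤ 1 := by
    refine ContinuousLinearMap.opNorm_le_bound _ zero_le_one fun y => ?_
    simpa using PiLp.norm_apply_le y i
  have hderiv : fderiv ℝ (fun y : EuclideanSpace ℝ (Fin n) => y i - a i) =
      fun _ => (EuclideanSpace.proj i : EuclideanSpace ℝ (Fin n) →L[ℝ] ℝ) := by
    funext y
    rw [fderiv_sub_const]
    exact (EuclideanSpace.proj i : EuclideanSpace ℝ (Fin n) →L[ℝ] ℝ).fderiv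
  match k with
  | 0 =>
    simp only [norm_iteratedFDeriv_zero, pow_zero, mul_one]
    refine le_trans ?_ hx
    simpa using PiLp.norm_apply_le (x - a) i
  | 1 =>
    rw [← norm_iteratedFDeriv_fderiv, hderiv]
    simpa [hd.ne'] using hL
  | k + 2 =>
    rw [← norm_iteratedFDeriv_fderiv, hderiv, iteratedFDeriv_const_of_ne (by omega)]
    simp only [Pi.zero_apply, norm_zero]
    positivity

lemma Gb_pow {V : Type*} [NormedAddCommGroup V] [NormedSpace ℝ V] {W : ℕ → ℝ} (hW : GoodW W)
    {f : V → ℝ} {x : V} {M A : ℝ} (hM : 0 ≤ M) (hA : 0 ≤ A) (h : Gb W f x M A) (r : ℕ) :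
    Gb W (fun y => f y ^ r) x (M ^ r) (r * A) := by
  simpa using Gb.prod hW (Finset.range r) (F := fun _ => f) (fun _ _ => hM) (fun _ _ => hA)
    (fun _ _ => h)

lemma factorial_sum_le (α : Fin n → ℕ) :
    ((∑ i, α i).factorial : ℝ) ≤ (n : ℝ) ^ (∑ i, α i) * ∏ i, ((α i).factorial : ℝ) := by
  have h1 := Finset.sum_pow_eq_sum_piAntidiag (Finset.univ : Finset (Fin n)) (fun _ => 1)
    (∑ i, α i)
  have h2 : Nat.multinomial Finset.univ α ≤ n ^ (∑ i, α i) := by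
    simp only [Finset.sum_const, Finset.card_univ, Fintype.card_fin, smul_eq_mul, mul_one,
      one_pow, Finset.prod_const_one, Nat.cast_id] at h1
    rw [h1]
    exact Finset.single_le_sum (f := fun k => Nat.multinomial Finset.univ k)
      (fun _ _ => Nat.zero_le _) (by simp)
  have h3 := Nat.multinomial_spec Finset.univ α
  have h4 : (∑ i, α i).factorial ≤ n ^ (∑ i, α i) * ∏ i, (α i).factorial := by
    rw [← h3, mul_comm]
    exact Nat.mul_le_mul_right _ h2
  exact_mod_cast h4

/-- Derivative bounds for monomials on the scale `d`. The factorial `k!` comes from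
`|α|^k ≤ e^{|α|} k!`. -/
lemma norm_iteratedFDeriv_monom_le {a x : EuclideanSpace ℝ (Fin n)} {d : ℝ} (hd : 0 < d)
    (hx : ‖x - a‖ ≤ d) (α : Fin n → ℕ) (k : ℕ) :
    ‖iteratedFDeriv ℝ k (monom α a) x‖ ≤
      (n * Real.exp 1) ^ (∑ i, α i) * (d ^ (∑ i, α i) / ((∑ i, α i).factorial : ℝ)) *
        (k.factorial / d ^ k) := by
  have h1 : Gb (fun _ => 1) (monom α a) x
      (∏ i, (|(1 : ℝ) / (α i).factorial| * d ^ α i)) (∑ i, (α i * (1 / d))) := by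
    have := Gb.prod goodW_one Finset.univ (x := x)
      (F := fun i (y : EuclideanSpace ℝ (Fin n)) => (1 / ((α i).factorial : ℝ)) *
        (y i - a i) ^ α i) (m := fun i => |(1 : ℝ) / (α i).factorial| * d ^ α i)
      (b := fun i => (α i * (1 / d))) (fun i _ => by positivity) (fun i _ => by positivity)
      (fun i _ => (Gb_pow goodW_one hd.le (by positivity) (Gb_coord hd hx i) (α i)).const_mul _)
    have e : monom α a = fun y => ∏ i, (1 / ((α i).factorial : ℝ)) * (y i - a i) ^ α i := by
      funext y
      simp [monom, div_eq_inv_mul]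
    rwa [e]
  have h2 := h1.bound k
  set s := ∑ i, α i with hs
  have e1 : ∏ i, (|(1 : ℝ) / (α i).factorial| * d ^ α i) =
      d ^ s / ∏ i, ((α i).factorial : ℝ) := by
    rw [Finset.prod_mul_distrib, Finset.prod_pow_eq_pow_sum, ← hs]
    simp [abs_of_nonneg, div_eq_inv_mul]
  have e2 : ∑ i, ((α i : ℝ) * (1 / d)) = s / d := by
    rw [← Finset.sum_mul, hs]; push_cast; ring
  rw [e1, e2, mul_one] at h2
  refine h2.trans ?_
  have h3 := Real.pow_div_factorial_le_exp s (by positivity) k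
  rw [div_le_iff₀ (by positivity), show Real.exp s = Real.exp 1 ^ s by
    rw [← Real.exp_nat_mul, mul_one]] at h3
  have h4 : 1 / ∏ i, ((α i).factorial : ℝ) ≤ (n : ℝ) ^ s / s.factorial := by
    rw [div_le_div_iff₀ (Finset.prod_pos fun i _ => by positivity) (by positivity), one_mul]
    exact factorial_sum_le α
  calc d ^ s / (∏ i, ((α i).factorial : ℝ)) * (s / d) ^ k
      = d ^ s * (1 / ∏ i, ((α i).factorial : ℝ)) * ((s : ℝ) ^ k / d ^ k) := by
        rw [div_pow]; ring
    _ ≤ d ^ s * ((n : ℝ) ^ s / s.factorial) * (Real.exp 1 ^ s * k.factorial / d ^ k) := by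
        gcongr
    _ = _ := by simp only [mul_pow]; ring

end Monom

/-! ### Partial derivatives -/

section Pderiv

variable {n : ℕ}

local notation "𝔼" => EuclideanSpace ℝ (Fin n)

lemma pderivE_apply_iteratedFDeriv (i : Fin n) {k : ℕ} (v : Fin k → 𝔼) {g : 𝔼 → ℝ}
    (hg : ContDiff ℝ (⊤ : ℕ∞) g) (x : 𝔼) :
    pderivE i (fun y => iteratedFDeriv ℝ k g y v) x =
      iteratedFDeriv ℝ (k + 1) g x (Fin.cons (EuclideanSpace.single i 1) v) := by
  have hd : DifferentiableAt ℝ (iteratedFDeriv ℝ k g) x :=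
    (hg.differentiable_iteratedFDeriv (by exact_mod_cast ENat.natCast_lt_top k)) x
  rw [iteratedFDeriv_succ_apply_left, pderivE]
  simp only [Fin.cons_zero, Fin.tail_cons]
  rw [fderiv_continuousMultilinear_apply_const_apply hd]

/-- A partial derivative of order `|α|` is the iterated derivative evaluated at a fixed tuple of
unit vectors. -/
lemma exists_pderivMulti_eq (α : Fin n → ℕ) :
    ∃ v : Fin (∑ i, α i) → 𝔼, (∀ j, ‖v j‖ ≤ 1) ∧ ∀ g : 𝔼 → ℝ, ContDiff ℝ (⊤ : ℕ∞) g →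
      ∀ x, pderivMulti α g x = iteratedFDeriv ℝ (∑ i, α i) g x v := by
  have key : ∀ L : List (Fin n), ∃ v : Fin ((L.map α).sum) → 𝔼, (∀ j, ‖v j‖ ≤ 1) ∧
      ∀ g : 𝔼 → ℝ, ContDiff ℝ (⊤ : ℕ∞) g →
        L.foldr (fun i g => (pderivE i)^[α i] g) g =
          fun x => iteratedFDeriv ℝ ((L.map α).sum) g x v := by
    intro L
    induction L with
    | nil => exact ⟨Fin.elim0, fun j => j.elim0, fun g _ => by
      funext x
      exact (iteratedFDeriv_zero_apply (𝕜 := ℝ) (f := g) (x := x) Fin.elim0).symm⟩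
    | cons i L ih =>
      obtain ⟨v, hv, h⟩ := ih
      have it : ∀ m k : ℕ, k = m + (L.map α).sum → ∃ w : Fin k → 𝔼, (∀ j, ‖w j‖ ≤ 1) ∧
          ∀ g : 𝔼 → ℝ, ContDiff ℝ (⊤ : ℕ∞) g →
            (pderivE i)^[m] (L.foldr (fun i g => (pderivE i)^[α i] g) g) =
              fun x => iteratedFDeriv ℝ k g x w := by
        intro m
        induction m with
        | zero =>
          rintro k hk
          rw [zero_add] at hk
          subst hk
          exact ⟨v, hv, h⟩
        | succ m ihm =>
          rintro k hk
          obtain ⟨w, hw, hgw⟩ := ihm _ rfl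
          obtain rfl : k = (m + (L.map α).sum) + 1 := by omega
          refine ⟨Fin.cons (EuclideanSpace.single i 1) w, fun j => ?_, fun g hg => ?_⟩
          · refine Fin.cases ?_ (fun j => ?_) j
            · simp
            · simpa using hw j
          · rw [Function.iterate_succ_apply', hgw g hg]
            funext x
            exact pderivE_apply_iteratedFDeriv i w hg x
      obtain ⟨w, hw, h'⟩ := it (α i) ((List.map α (i :: L)).sum) (by simp)
      exact ⟨w, hw, h'⟩
  have h := key (List.finRange n)
  have hs : ((List.finRange n).map α).sum = ∑ i, α i := by
    rw [← List.ofFn_eq_map, List.sum_ofFn]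
  rw [hs] at h
  exact h.imp fun v hv => ⟨hv.1, fun g hg x => congrFun (hv.2 g hg) x⟩

lemma abs_pderivMulti_le (α : Fin n → ℕ) {g : 𝔼 → ℝ} (hg : ContDiff ℝ (⊤ : ℕ∞) g) (x : 𝔼) :
    |pderivMulti α g x| ≤ ‖iteratedFDeriv ℝ (∑ i, α i) g x‖ := by
  obtain ⟨v, hv, h⟩ := exists_pderivMulti_eq α
  rw [h g hg, ← Real.norm_eq_abs]
  refine ((iteratedFDeriv ℝ (∑ i, α i) g x).le_opNorm v).trans ?_
  refine mul_le_of_le_one_right (norm_nonneg _) ?_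
  exact Finset.prod_le_one (fun j _ => norm_nonneg _) fun j _ => hv j

lemma pderivMulti_sum_mul (α : Fin n → ℕ) {ι : Type*} (s : Finset ι) (c : ι → ℝ)
    {g : ι → 𝔼 → ℝ} (hg : ∀ i ∈ s, ContDiff ℝ (⊤ : ℕ∞) (g i)) (x : 𝔼) :
    pderivMulti α (fun y => ∑ i ∈ s, g i y * c i) x = ∑ i ∈ s, pderivMulti α (g i) x * c i := by
  obtain ⟨v, hv, h⟩ := exists_pderivMulti_eq α
  have h2 : ∀ i ∈ s, ContDiff ℝ (⊤ : ℕ∞) fun y => g i y * c i :=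
    fun i hi => (hg i hi).mul contDiff_const
  rw [h _ (ContDiff.sum h2), iteratedFDeriv_fun_sum_apply
    (fun i hi => ((smooth_le (h2 i hi) _).contDiffAt)), sum_apply]
  refine Finset.sum_congr rfl fun i hi => ?_
  rw [h _ (hg i hi)]
  have : (fun y => g i y * c i) = c i • g i := by
    funext y
    simp [mul_comm]
  rw [this, iteratedFDeriv_const_smul_apply ((smooth_le (hg i hi) _).contDiffAt)]
  simp [mul_comm]

lemma pderivE_monom (i : Fin n) (β : Fin n → ℕ) (a : 𝔼) :
    pderivE i (monom β a) =
      if 1 ≤ β i then monom (Function.update β i (β i - 1)) a else 0 := by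
  funext x
  have hd : DifferentiableAt ℝ (monom β a) x :=
    (monom_contDiff β a).differentiable (by simp) x
  rw [pderivE, ← hd.lineDeriv_eq_fderiv, lineDeriv]
  have e : ∀ γ : Fin n → ℕ, (∀ j, j ≠ i → γ j = β j) → ∀ y : 𝔼, (∀ j, j ≠ i → y j = x j) →
      monom γ a y = (y i - a i) ^ (γ i) / (γ i).factorial *
        ∏ j ∈ Finset.univ.erase i, ((x j - a j) ^ (β j) / (β j).factorial) := by
    intro γ hγ y hy
    rw [monom, ← Finset.mul_prod_erase _ _ (Finset.mem_univ i)]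
    congr 1
    refine Finset.prod_congr rfl fun j hj => ?_
    rw [hγ j (Finset.ne_of_mem_erase hj), hy j (Finset.ne_of_mem_erase hj)]
  have e1 : (fun t : ℝ => monom β a (x + t • EuclideanSpace.single i 1)) = fun t =>
      (x i + t - a i) ^ (β i) / (β i).factorial *
        ∏ j ∈ Finset.univ.erase i, ((x j - a j) ^ (β j) / (β j).factorial) := by
    funext t
    rw [e β (fun _ _ => rfl) _ (fun j hj => by simp [hj])]
    simp
  have e2 : HasDerivAt (fun t : ℝ => (x i + t - a i) ^ (β i) / (β i).factorial *
        ∏ j ∈ Finset.univ.erase i, ((x j - a j) ^ (β j) / (β j).factorial))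
      ((β i * (x i + 0 - a i) ^ (β i - 1) * 1) / (β i).factorial *
        ∏ j ∈ Finset.univ.erase i, ((x j - a j) ^ (β j) / (β j).factorial)) 0 := by
    refine HasDerivAt.mul_const ?_ _
    refine HasDerivAt.div_const ?_ _
    exact (((hasDerivAt_id (0 : ℝ)).const_add (x i)).sub_const (a i)).pow (β i)
  rw [e1, e2.deriv]
  split_ifs with h
  · rw [e _ (fun j hj => by simp [hj]) x (fun _ _ => rfl)]
    obtain ⟨m, hm⟩ : ∃ m, β i = m + 1 := ⟨β i - 1, by omega⟩
    simp only [Function.update_self, hm, Nat.add_sub_cancel, add_zero, mul_one, Nat.factorial_succ]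
    congr 1
    push_cast
    field_simp
  · have : β i = 0 := by omega
    simp [this]

lemma pderivE_zero (i : Fin n) : pderivE i (0 : 𝔼 → ℝ) = 0 := by
  funext x
  simp [pderivE]

lemma iterate_pderivE_zero (i : Fin n) (m : ℕ) : (pderivE i)^[m] (0 : 𝔼 → ℝ) = 0 :=
  Function.iterate_fixed (pderivE_zero i) m

lemma iterate_pderivE_monom (i : Fin n) (β : Fin n → ℕ) (a : 𝔼) (m : ℕ) :
    (pderivE i)^[m] (monom β a) =
      if m ≤ β i then monom (Function.update β i (β i - m)) a else 0 := by
  induction m generalizing β with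
  | zero => simp
  | succ m ih =>
    rw [Function.iterate_succ_apply, pderivE_monom]
    split_ifs with h1 h2 h2
    · rw [ih, if_pos (by simp; omega)]
      simp [Nat.sub_sub, add_comm]
    · rw [ih, if_neg (by simp; omega)]
    · omega
    · exact iterate_pderivE_zero i m

lemma monom_self (β : Fin n → ℕ) (a : 𝔼) : monom β a a = if β = 0 then 1 else 0 := by
  split_ifs with h
  · simp [h, monom]
  · obtain ⟨i, hi⟩ : ∃ i, β i ≠ 0 := by
      by_contra! hc
      exact h (funext hc)
    exact Finset.prod_eq_zero (Finset.mem_univ i) (by simp [hi])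

lemma pderivMulti_monom_self (α β : Fin n → ℕ) (a : 𝔼) :
    pderivMulti α (monom β a) a = if α = β then 1 else 0 := by
  have key : ∀ L : List (Fin n), L.Nodup →
      L.foldr (fun i g => (pderivE i)^[α i] g) (monom β a) =
        if ∀ i ∈ L, α i ≤ β i then monom (fun j => if j ∈ L then β j - α j else β j) a else 0 := by
    intro L
    induction L with
    | nil => simp
    | cons i L ih =>
      intro hL
      rw [List.nodup_cons] at hL
      rw [List.foldr_cons, ih hL.2]
      by_cases h1 : ∀ j ∈ L, α j ≤ β j
      · rw [if_pos h1, iterate_pderivE_monom]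
        simp only [hL.1, if_false]
        by_cases h2 : α i ≤ β i
        · rw [if_pos h2, if_pos (by simpa using ⟨h2, h1⟩)]
          congr 1
          funext j
          by_cases hj : j = i
          · subst hj; simp
          · simp [hj]
        · rw [if_neg h2, if_neg (by simp [h2])]
      · rw [if_neg h1, iterate_pderivE_zero, if_neg]
        exact fun h => h1 fun j hj => h j (List.mem_cons_of_mem _ hj)
  rw [pderivMulti, key _ (List.nodup_finRange n)]
  simp only [List.mem_finRange, forall_true_left, if_true]
  by_cases h : ∀ i, α i ≤ β i
  · rw [if_pos h, monom_self]
    refine if_congr ?_ rfl rfl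
    constructor
    · intro h0
      funext i
      have := congrFun h0 i
      have := h i
      simp at *
      omega
    · rintro rfl
      funext i
      simp
  · rw [if_neg h, if_neg]
    · rfl
    · rintro rfl
      exact h fun i => le_rfl

end Pderiv

/-! ### Taylor polynomials of jets -/

section Taylor

variable {n : ℕ}

local notation "𝔼" => EuclideanSpace ℝ (Fin n)

lemma mem_midx {p : ℕ} {α : Fin n → ℕ} : α ∈ midx n p ↔ ∑ i, α i ≤ p := by
  simp only [midx, Finset.mem_filter, Fintype.mem_piFinset, Finset.mem_range, and_iff_right_iff_imp]
  intro h i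
  have := Finset.single_le_sum (f := α) (fun _ _ => Nat.zero_le _) (Finset.mem_univ i)
  omega

lemma card_midx_le (n p : ℕ) : (midx n p).card ≤ (2 ^ n) ^ (p + 1) := by
  calc (midx n p).card ≤ (p + 1) ^ n := (Finset.card_filter_le _ _).trans (by simp)
    _ ≤ (2 ^ (p + 1)) ^ n := Nat.pow_le_pow_left (Nat.lt_two_pow_self).le n
    _ = _ := by rw [← pow_mul, ← pow_mul, mul_comm]

lemma Tpoly_eq (F : (Fin n → ℕ) → 𝔼 → ℝ) (a : 𝔼) (p : ℕ) :
    Tpoly F a p = fun x => ∑ α ∈ midx n p, monom α a x * F α a := rfl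

lemma Tpoly_contDiff (F : (Fin n → ℕ) → 𝔼 → ℝ) (a : 𝔼) (p : ℕ) :
    ContDiff ℝ (⊤ : ℕ∞) (Tpoly F a p) := by
  rw [Tpoly_eq]
  exact ContDiff.sum fun α _ => (monom_contDiff α a).mul contDiff_const

lemma pderivMulti_Tpoly_self (F : (Fin n → ℕ) → 𝔼 → ℝ) (a : 𝔼) {p : ℕ} {α : Fin n → ℕ}
    (h : ∑ i, α i ≤ p) : pderivMulti α (Tpoly F a p) a = F α a := by
  rw [Tpoly_eq, pderivMulti_sum_mul α _ (fun β => F β a) (fun β _ => monom_contDiff β a)]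
  simp only [pderivMulti_monom_self, ite_mul, one_mul, zero_mul]
  rw [Finset.sum_ite_eq, if_pos (mem_midx.2 h)]

/-- The binomial theorem for normalised monomials. -/
lemma monom_recenter (γ : Fin n → ℕ) (a b x : 𝔼) :
    monom γ b x = ∑ α ∈ Fintype.piFinset fun i => Finset.range (γ i + 1),
      monom α a x * monom (γ - α) b a := by
  have h1 : ∀ i, (x i - b i) ^ γ i / ((γ i).factorial : ℝ) =
      ∑ j ∈ Finset.range (γ i + 1), ((x i - a i) ^ j / (j.factorial : ℝ)) *
        ((a i - b i) ^ (γ i - j) / ((γ i - j).factorial : ℝ)) := by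
    intro i
    rw [← sub_add_sub_cancel (x i) (a i) (b i), add_pow, Finset.sum_div]
    refine Finset.sum_congr rfl fun j hj => ?_
    have hj' : j ≤ γ i := by have := Finset.mem_range.1 hj; omega
    rw [Nat.cast_choose ℝ hj']
    have : ((γ i).factorial : ℝ) ≠ 0 := by positivity
    field_simp
  rw [monom, Finset.prod_congr rfl fun i _ => h1 i, Finset.prod_univ_sum]
  refine Finset.sum_congr rfl fun α _ => ?_
  rw [monom, monom, ← Finset.prod_mul_distrib]
  rfl

lemma Tpoly_recenter (F : (Fin n → ℕ) → 𝔼 → ℝ) (a b x : 𝔼) (p : ℕ) :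
    Tpoly F b p x = ∑ α ∈ midx n p, monom α a x *
      ∑ β ∈ midx n (p - ∑ i, α i), monom β b a * F (α + β) b := by
  simp only [Tpoly_eq, monom_recenter _ a b x, Finset.sum_mul, Finset.mul_sum]
  rw [Finset.sum_sigma', Finset.sum_sigma']
  refine Finset.sum_nbij' (fun s => ⟨s.2, s.1 - s.2⟩) (fun s => ⟨s.1 + s.2, s.1⟩) ?_ ?_ ?_ ?_ ?_
  · rintro ⟨γ, α⟩ h
    simp only [Finset.mem_sigma, mem_midx, Fintype.mem_piFinset, Finset.mem_range,
      Nat.lt_succ_iff] at h ⊢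
    have h2 : ∑ i, (γ - α) i + ∑ i, α i = ∑ i, γ i := by
      rw [← Finset.sum_add_distrib]
      exact Finset.sum_congr rfl fun i _ => Nat.sub_add_cancel (h.2 i)
    omega
  · rintro ⟨α, β⟩ h
    simp only [Finset.mem_sigma, mem_midx, Fintype.mem_piFinset, Finset.mem_range,
      Nat.lt_succ_iff, Pi.add_apply, Finset.sum_add_distrib] at h ⊢
    exact ⟨by omega, fun i => by omega⟩
  · rintro ⟨γ, α⟩ h
    simp only [Finset.mem_sigma, mem_midx, Fintype.mem_piFinset, Finset.mem_range,
      Nat.lt_succ_iff] at h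
    have : α + (γ - α) = γ := funext fun i => Nat.add_sub_cancel' (h.2 i)
    simp [this]
  · rintro ⟨α, β⟩ h
    have : α + β - α = β := funext fun i => Nat.add_sub_cancel_left _ _
    simp [this]
  · rintro ⟨γ, α⟩ h
    simp only [Finset.mem_sigma, mem_midx, Fintype.mem_piFinset, Finset.mem_range,
      Nat.lt_succ_iff] at h
    have : α + (γ - α) = γ := funext fun i => Nat.add_sub_cancel' (h.2 i)
    simp only [this]
    ring

/-- The coefficients at `a` of the difference of Taylor polynomials `T_a^{p'} F - T_b^p F`. -/
noncomputable def diffCoef (F : (Fin n → ℕ) → 𝔼 → ℝ) (a b : 𝔼) (p : ℕ) (α : Fin n → ℕ) : ℝ :=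
  if ∑ i, α i ≤ p then Rrem F b p α a else F α a

lemma Tpoly_sub (F : (Fin n → ℕ) → 𝔼 → ℝ) (a b x : 𝔼) {p p' : ℕ} (hp : p ≤ p') :
    Tpoly F a p' x - Tpoly F b p x = ∑ α ∈ midx n p', monom α a x * diffCoef F a b p α := by
  have hsub : midx n p ⊆ midx n p' := fun α h => mem_midx.2 ((mem_midx.1 h).trans hp)
  have hf : midx n p = (midx n p').filter fun α => ∑ i, α i ≤ p := by
    ext α
    simp only [Finset.mem_filter, mem_midx]
    omega
  rw [Tpoly_recenter F a b x p, Tpoly_eq, hf, Finset.sum_filter, ← Finset.sum_sub_distrib]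
  refine Finset.sum_congr rfl fun α _ => ?_
  unfold diffCoef
  split_ifs with h
  · rw [← mul_sub]
    rfl
  · rw [sub_zero]

/-- `(r τ_1)^k / (τ_1 ⋯ τ_k)`, that is `r^k S_k / k!` for the descendant `S` of `ν`. With `r = ρ d`
this is the size of a Whitney remainder of order `k` on the scale `d`. -/
noncomputable def flat (ν : ℕ → ℝ) (r : ℝ) (k : ℕ) : ℝ :=
  (r * tauSeq ν 1) ^ k * ∏ j ∈ Finset.range k, (1 / tauSeq ν (j + 1))

variable {ν : ℕ → ℝ}

lemma GoodSeq.flat_pos (h : GoodSeq ν) {r : ℝ} (hr : 0 < r) (k : ℕ) : 0 < flat ν r k := by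
  have := h.tau_pos
  exact mul_pos (pow_pos (mul_pos hr (this 1)) k)
    (Finset.prod_pos fun j _ => one_div_pos.2 (this _))

lemma GoodSeq.flat_anti (h : GoodSeq ν) {r : ℝ} (hr : 0 < r) {j k : ℕ} (hjk : j ≤ k)
    (hk : r * tauSeq ν 1 ≤ tauSeq ν k) : flat ν r k ≤ flat ν r j := by
  induction k, hjk using Nat.le_induction with
  | base => rfl
  | succ k hjk ih =>
    refine le_trans ?_ (ih (hk.trans (h.tau_anti k.le_succ)))
    have e : flat ν r (k + 1) = flat ν r k * (r * tauSeq ν 1 / tauSeq ν (k + 1)) := by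
      unfold flat
      rw [pow_succ, Finset.prod_range_succ]
      ring
    rw [e]
    exact mul_le_of_le_one_right (h.flat_pos hr k).le ((div_le_one (h.tau_pos _)).2 hk)

lemma sigma_eq_flat (h : GoodSeq ν) (ρ d : ℝ) (k : ℕ) :
    ρ ^ k * prodSeq (sigmaSeq ν) k * d ^ k = k.factorial * flat ν (ρ * d) k := by
  rw [h.prodSeq_sigma, flat]
  ring

lemma coef_jet_le (h : GoodSeq ν) {F : (Fin n → ℕ) → 𝔼 → ℝ} {a : 𝔼} {C ρ d : ℝ} (hC : 0 < C)
    (hρ : 0 < ρ) (hd : 0 < d) {α : Fin n → ℕ}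
    (hF : |F α a| ≤ C * ρ ^ (∑ i, α i) * prodSeq (sigmaSeq ν) (∑ i, α i))
    {j p : ℕ} (hj : j ≤ ∑ i, α i) (hα : ∑ i, α i ≤ p) (hp : ρ * d * tauSeq ν 1 ≤ tauSeq ν p) :
    |F α a| * (d ^ (∑ i, α i) / (∑ i, α i).factorial) ≤ C * flat ν (ρ * d) j := by
  set s := ∑ i, α i
  have h1 := h.flat_anti (mul_pos hρ hd) hj (hp.trans (h.tau_anti hα))
  calc |F α a| * (d ^ s / s.factorial)
      ≤ (C * ρ ^ s * prodSeq (sigmaSeq ν) s) * (d ^ s / s.factorial) := by gcongr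
    _ = C * (ρ ^ s * prodSeq (sigmaSeq ν) s * d ^ s) / s.factorial := by ring
    _ = C * flat ν (ρ * d) s := by
        rw [sigma_eq_flat h]
        have : (s.factorial : ℝ) ≠ 0 := by positivity
        field_simp
    _ ≤ _ := by gcongr

/-- On the scale `d` all coefficients of `T_a^{p'} F - T_b^p F` are as small as the remainder
term of order `p + 1`. -/
lemma diffCoef_le (h : GoodSeq ν) {F : (Fin n → ℕ) → 𝔼 → ℝ} {a b : 𝔼} {C ρ d : ℝ} (hC : 0 < C)
    (hρ : 0 < ρ) (hd : 0 < d) {p p' : ℕ}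
    (hF : ∀ α, |F α a| ≤ C * ρ ^ (∑ i, α i) * prodSeq (sigmaSeq ν) (∑ i, α i))
    (hR : ∀ α : Fin n → ℕ, ∑ i, α i ≤ p →
      |Rrem F b p α a| ≤ C * ρ ^ (p + 1) * prodSeq (sigmaSeq ν) (p + 1) *
        ‖a - b‖ ^ (p + 1 - ∑ i, α i) / (Nat.factorial (p + 1 - ∑ i, α i) : ℝ))
    (hab : ‖a - b‖ ≤ d) (hp' : ρ * d * tauSeq ν 1 ≤ tauSeq ν p') {α : Fin n → ℕ}
    (hα : ∑ i, α i ≤ p') :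
    |diffCoef F a b p α| * (d ^ (∑ i, α i) / (∑ i, α i).factorial) ≤
      C * 2 ^ (p + 1) * flat ν (ρ * d) (p + 1) := by
  have hfl := h.flat_pos (mul_pos hρ hd) (p + 1)
  unfold diffCoef
  split_ifs with hs
  · have hR' := hR α hs
    set s := ∑ i, α i
    have hσ : 0 < prodSeq (sigmaSeq ν) (p + 1) := by
      rw [h.prodSeq_sigma]
      have := h.tau_pos
      exact mul_pos (by positivity) (mul_pos (pow_pos (this 1) _)
        (Finset.prod_pos fun j _ => one_div_pos.2 (this _)))
    have hch : ((p + 1).choose s : ℝ) ≤ 2 ^ (p + 1) := by exact_mod_cast Nat.choose_le_two_pow _ _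
    have hs' : s ≤ p + 1 := by omega
    calc |Rrem F b p α a| * (d ^ s / s.factorial)
        ≤ (C * ρ ^ (p + 1) * prodSeq (sigmaSeq ν) (p + 1) * d ^ (p + 1 - s) /
            ((p + 1 - s).factorial : ℝ)) * (d ^ s / s.factorial) := by
          refine mul_le_mul_of_nonneg_right (hR'.trans ?_) (by positivity)
          gcongr
      _ = C * (ρ ^ (p + 1) * prodSeq (sigmaSeq ν) (p + 1) * (d ^ (p + 1 - s) * d ^ s)) /
            ((p + 1 - s).factorial * s.factorial) := by
          have : (s.factorial : ℝ) ≠ 0 := by positivity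
          have : ((p + 1 - s).factorial : ℝ) ≠ 0 := by positivity
          field_simp
      _ = C * (p + 1).choose s * flat ν (ρ * d) (p + 1) := by
          rw [← pow_add, Nat.sub_add_cancel hs', sigma_eq_flat h, Nat.cast_choose ℝ hs']
          have : (s.factorial : ℝ) ≠ 0 := by positivity
          have : ((p + 1 - s).factorial : ℝ) ≠ 0 := by positivity
          field_simp
      _ ≤ _ := by gcongr
  · refine (coef_jet_le h hC hρ hd (hF α) (j := p + 1) (by omega) hα hp').trans ?_
    have : (1 : ℝ) ≤ 2 ^ (p + 1) := one_le_pow₀ (by norm_num)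
    have h2 : 0 ≤ C * flat ν (ρ * d) (p + 1) := by positivity
    nlinarith

/-- Derivative bounds for polynomials with coefficients that are small on the scale
`d = c τ_q`. -/
lemma GoodSeq.Gb_poly (h : GoodSeq ν) {a x : 𝔼} {c : ℝ} (hc : 0 < c) {q p : ℕ}
    (hx : ‖x - a‖ ≤ c * tauSeq ν q) {co : (Fin n → ℕ) → ℝ} {X : ℝ} (hX : 0 ≤ X)
    (hco : ∀ α : Fin n → ℕ, ∑ i, α i ≤ p →
      |co α| * ((c * tauSeq ν q) ^ (∑ i, α i) / (∑ i, α i).factorial) ≤ X) :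
    Gb (prodSeq ν) (fun y => ∑ α ∈ midx n p, monom α a y * co α) x
      (X * P ν q * (2 ^ n * ((n + 1) * Real.exp 1)) ^ (p + 1)) (1 / c) := by
  have hd : 0 < c * tauSeq ν q := mul_pos hc (h.tau_pos q)
  set d := c * tauSeq ν q with hd'
  have hP := h.P_pos q
  have he : (1 : ℝ) ≤ (n + 1) * Real.exp 1 := by
    have h1 : (1 : ℝ) ≤ Real.exp 1 := Real.one_le_exp (by norm_num)
    have h2 : (1 : ℝ) ≤ n + 1 := by simp
    nlinarith
  set e := ((n : ℝ) + 1) * Real.exp 1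
  have h1 : Gb (prodSeq ν) (fun y => ∑ α ∈ midx n p, monom α a y * co α) x
      (∑ _α ∈ midx n p, e ^ (p + 1) * (X * P ν q)) (1 / c) := by
    refine Gb.sum _ fun α hα => ?_
    have hα := mem_midx.1 hα
    refine ⟨(monom_contDiff α a).mul contDiff_const, fun k => ?_⟩
    have e0 : (fun y => monom α a y * co α) = co α • monom α a := by
      funext y
      simp [mul_comm]
    have hm := norm_iteratedFDeriv_monom_le hd hx α k
    have hN := h.prodSeq_pos k
    set s := ∑ i, α i
    have hk : (k.factorial : ℝ) / d ^ k ≤ P ν q * ((1 / c) ^ k * prodSeq ν k) := by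
      rw [div_le_iff₀ (by positivity)]
      refine (h.factorial_le q k).trans (le_of_eq ?_)
      rw [hd', mul_pow, div_pow, one_pow]
      field_simp
    have hn : ((n : ℝ) * Real.exp 1) ^ s ≤ e ^ (p + 1) := by
      calc ((n : ℝ) * Real.exp 1) ^ s ≤ e ^ s := by
            refine pow_le_pow_left₀ (by positivity) ?_ s
            exact mul_le_mul_of_nonneg_right (by linarith) (Real.exp_pos 1).le
        _ ≤ _ := pow_le_pow_right₀ he (by omega)
    rw [e0, iteratedFDeriv_const_smul_apply (smooth_le (monom_contDiff α a) k).contDiffAt,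
      norm_smul, Real.norm_eq_abs]
    calc |co α| * ‖iteratedFDeriv ℝ k (monom α a) x‖
        ≤ |co α| * ((n * Real.exp 1) ^ s * (d ^ s / s.factorial) * (k.factorial / d ^ k)) := by
          gcongr
      _ = (n * Real.exp 1) ^ s * (|co α| * (d ^ s / s.factorial)) * (k.factorial / d ^ k) := by
          ring
      _ ≤ e ^ (p + 1) * X * (P ν q * ((1 / c) ^ k * prodSeq ν k)) := by
          have := hco α hα
          gcongr
      _ = _ := by ring
  refine h1.mono h.goodW (Finset.sum_nonneg fun _ _ => by positivity) (by positivity) ?_ le_rfl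
  rw [Finset.sum_const, nsmul_eq_mul]
  have hcard : ((midx n p).card : ℝ) ≤ (2 ^ n) ^ (p + 1) := by exact_mod_cast card_midx_le n p
  calc _ ≤ ((2 : ℝ) ^ n) ^ (p + 1) * (e ^ (p + 1) * (X * P ν q)) := by gcongr
    _ = _ := by rw [mul_pow ((2 : ℝ) ^ n)]; ring

/-- Derivative bounds for differences of Taylor polynomials of a Whitney jet. -/
lemma Gb_Tpoly_sub (h : GoodSeq ν) {ν' : ℕ → ℝ} (h' : GoodSeq ν') {F : (Fin n → ℕ) → 𝔼 → ℝ}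
    {E : Set 𝔼} {C ρ c : ℝ} (hC : 0 < C) (hρ : 0 < ρ) (hc : 0 < c)
    (hF : ∀ α, ∀ a ∈ E, |F α a| ≤ C * ρ ^ (∑ i, α i) * prodSeq (sigmaSeq ν) (∑ i, α i))
    (hR : ∀ p : ℕ, ∀ α : Fin n → ℕ, ∑ i, α i ≤ p → ∀ a ∈ E, ∀ b ∈ E,
      |Rrem F a p α b| ≤ C * ρ ^ (p + 1) * prodSeq (sigmaSeq ν) (p + 1) *
        ‖b - a‖ ^ (p + 1 - ∑ i, α i) / (Nat.factorial (p + 1 - ∑ i, α i) : ℝ))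
    {p p' q : ℕ} (hpp : p ≤ p') (hp' : ρ * (c * tauSeq ν' q) * tauSeq ν 1 ≤ tauSeq ν p')
    {a b x : 𝔼} (ha : a ∈ E) (hb : b ∈ E) (hab : ‖a - b‖ ≤ c * tauSeq ν' q)
    (hx : ‖x - a‖ ≤ c * tauSeq ν' q) :
    Gb (prodSeq ν') (fun y => Tpoly F a p' y - Tpoly F b p y) x
      (C * 2 ^ (p + 1) * flat ν (ρ * (c * tauSeq ν' q)) (p + 1) * GoodSeq.P ν' q *
        (2 ^ n * ((n + 1) * Real.exp 1)) ^ (p' + 1)) (1 / c) := by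
  have hd : 0 < c * tauSeq ν' q := mul_pos hc (h'.tau_pos q)
  have hfl := h.flat_pos (mul_pos hρ hd) (p + 1)
  simp only [Tpoly_sub F a b _ hpp]
  exact h'.Gb_poly hc hx (by positivity) fun α hα => diffCoef_le h hC hρ hd (fun α => hF α a ha)
    (fun α hα => hR p α hα b hb a ha) hab hp' hα

/-- On the scale `c τ'_q`, a jet for the descendant of `ν` is flat of order `K q` up to the `K`-th
power of `1 / P_q`. This is where `ν` and `ν'` interact. -/
lemma flat_le (h : GoodSeq ν) {ν' : ℕ → ℝ} (h' : GoodSeq ν') {K : ℕ} {C ρ c : ℝ} (hρ : 0 < ρ)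
    (hc : 0 < c) (hle : ∀ q, tauSeq ν' q ≤ C * tauSeq ν (K * q)) (q : ℕ) :
    flat ν (ρ * (c * tauSeq ν' q)) (K * q) ≤
      ((ρ * c * tauSeq ν 1 * C) ^ q / GoodSeq.P ν' q) ^ K := by
  have h1 := h.tau_pos 1
  have h2 := h'.tau_pos q
  unfold flat
  calc _ ≤ (ρ * (c * tauSeq ν' q) * tauSeq ν 1) ^ (K * q) *
        (∏ i ∈ Finset.range q, (C / tauSeq ν' (i + 1))) ^ K := by
        refine mul_le_mul_of_nonneg_left (h.prod_inv_tau_le h' hle q) (by positivity)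
    _ = _ := by
        rw [mul_comm K q, pow_mul, ← mul_pow]
        congr 1
        unfold GoodSeq.P
        rw [Finset.prod_div_distrib, Finset.prod_div_distrib, Finset.prod_const, Finset.prod_const,
          Finset.card_range, mul_pow _ C, div_div_eq_mul_div]
        rw [show ρ * (c * tauSeq ν' q) * tauSeq ν 1 = ρ * c * tauSeq ν 1 * tauSeq ν' q by ring,
          mul_pow _ (tauSeq ν' q)]
        ring

end Taylor

/-! ### Partitions of unity near a bounded set -/

section Partition

variable {n : ℕ}

local notation "𝔼" => EuclideanSpace ℝ (Fin n)

/-- A finite family `ψ_m`, `m ∈ I`, of smooth functions that sum up to `1` near `E`, with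
derivative bounds `‖D^k ψ_m‖ ≤ M A^k W_k`. Each `m ∈ I` comes with a point `pt m ∈ E`; near a
given `x` at most `3 ^ n` of the functions do not vanish, and for these `pt m` is within distance
`r` of `x`. -/
structure IsPartition (W : ℕ → ℝ) (E : Set 𝔼) (r M A : ℝ) (I : Finset (Fin n → ℕ))
    (ψ : (Fin n → ℕ) → 𝔼 → ℝ) (pt : (Fin n → ℕ) → 𝔼) : Prop where
  mem : ∀ m ∈ I, pt m ∈ E
  gb : ∀ m x, Gb W (ψ m) x M A
  loc : ∀ x, ∃ J : Finset (Fin n → ℕ), J.card ≤ 3 ^ n ∧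
    (∀ m, m ∉ J → m ∈ I → ψ m =ᶠ[nhds x] fun _ => 0) ∧ ∀ m ∈ J, m ∈ I → ‖x - pt m‖ ≤ r
  one : ∀ a ∈ E, ∀ᶠ x in nhds a, ∑ m ∈ I, ψ m x = 1

lemma Gb_comp_coord {W : ℕ → ℝ} {Θ : ℝ → ℝ} {M A : ℝ} (h : ∀ t, Gb W Θ t M A) (s : ℝ) (i : Fin n)
    (x : 𝔼) :
    Gb W (fun y : 𝔼 => Θ (y i - s)) x M A := by
  set L : 𝔼 →L[ℝ] ℝ := EuclideanSpace.proj i with hLdef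
  have hL : ‖L‖ ≤ 1 := by
    refine ContinuousLinearMap.opNorm_le_bound _ zero_le_one fun y => ?_
    simpa [hLdef] using PiLp.norm_apply_le y i
  have hs : ContDiff ℝ (⊤ : ℕ∞) fun t => Θ (t - s) :=
    (h 0).smooth.comp (contDiff_id.sub contDiff_const)
  refine ⟨hs.comp L.contDiff, fun k => ?_⟩
  have e := L.iteratedFDeriv_comp_right hs x (i := k) (by exact_mod_cast le_top)
  have e' : ((fun t => Θ (t - s)) ∘ L) = fun y : 𝔼 => Θ (y i - s) := rfl
  rw [e'] at e
  rw [e, iteratedFDeriv_comp_sub]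
  refine (ContinuousMultilinearMap.norm_compContinuousLinearMap_le _ _).trans ?_
  refine (mul_le_of_le_one_right (norm_nonneg _)
    (Finset.prod_le_one (fun _ _ => norm_nonneg _) fun _ _ => hL)).trans ?_
  exact (h _).bound k

lemma norm_le_of_coord {y : 𝔼} {t : ℝ} (ht : 0 ≤ t) (h : ∀ i, |y i| ≤ t) : ‖y‖ ≤ (n + 1) * t := by
  rw [EuclideanSpace.norm_eq]
  refine Real.sqrt_le_iff.2 ⟨by positivity, ?_⟩
  calc ∑ i, ‖y i‖ ^ 2 ≤ ∑ _i : Fin n, t ^ 2 :=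
        Finset.sum_le_sum fun i _ => pow_le_pow_left₀ (norm_nonneg _) (h i) 2
    _ = n * t ^ 2 := by simp
    _ ≤ _ := by
      have : (n : ℝ) ≤ (n + 1) ^ 2 := by
        have : (0 : ℝ) ≤ n := n.cast_nonneg
        nlinarith
      rw [mul_pow]
      gcongr

/-- Tensor products of differences of a smooth step function, on a grid of width `δ`. -/
lemma exists_isPartition_of_step {W : ℕ → ℝ} (hW : GoodW W) {E : Set 𝔼}
    (hE : Bornology.IsBounded E) {δ M A : ℝ} (hδ : 0 < δ) (hM : 0 ≤ M) (hA : 0 ≤ A) {Θ : ℝ → ℝ}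
    (hΘ : ∀ t, Gb W Θ t M A) (h0 : ∀ t ≤ 0, Θ t = 0) (h1 : ∀ t, δ ≤ t → Θ t = 1) :
    ∃ I ψ pt, IsPartition W E ((n + 1) * (3 * δ)) ((2 * M) ^ n) (n * A) I ψ pt := by
  classical
  obtain ⟨r, hr⟩ := hE.subset_closedBall (0 : 𝔼)
  set L := r + 1 + δ with hL
  obtain ⟨R, hR⟩ := exists_nat_ge ((2 * (r + 1) + δ) / δ)
  rw [div_le_iff₀ hδ] at hR
  set s : ℕ → ℝ := fun m => δ * m - L with hs
  set b : ℕ → ℝ → ℝ := fun m t => Θ (t - s m) - Θ (t - s (m + 1)) with hb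
  have hs1 : ∀ m, s (m + 1) = s m + δ := fun m => by simp only [hs]; push_cast; ring
  have hb0 : ∀ m t, (t ≤ s m ∨ s m + 2 * δ ≤ t) → b m t = 0 := by
    rintro m t (h | h)
    · simp only [hb]
      rw [h0 _ (by linarith), h0 _ (by rw [hs1]; linarith), sub_self]
    · simp only [hb]
      rw [h1 _ (by linarith), h1 _ (by rw [hs1]; linarith), sub_self]
  set ψ : (Fin n → ℕ) → 𝔼 → ℝ := fun m x => ∏ i, b (m i) (x i) with hψ
  have hψ0 : ∀ m x i, (x i ≤ s (m i) ∨ s (m i) + 2 * δ ≤ x i) → ψ m x = 0 := fun m x i h =>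
    Finset.prod_eq_zero (Finset.mem_univ i) (hb0 _ _ h)
  set box : Finset (Fin n → ℕ) := Fintype.piFinset fun _ => Finset.range R with hbox
  set good : (Fin n → ℕ) → 𝔼 → Prop := fun m a =>
    a ∈ E ∧ ∀ i, s (m i) - δ ≤ a i ∧ a i ≤ s (m i) + 3 * δ with hgood
  set I := box.filter fun m => ∃ a, good m a with hI
  have hpt : ∀ m, ∃ a, m ∈ I → good m a := fun m => by
    by_cases h : m ∈ I
    · exact (Finset.mem_filter.1 h).2.imp fun a ha _ => ha
    · exact ⟨0, fun h' => absurd h' h⟩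
  choose pt hpt using hpt
  refine ⟨I, ψ, pt, fun m hm => (hpt m hm).1, fun m x => ?_, fun x => ?_, fun a ha => ?_⟩
  · have h : ∀ i ∈ (Finset.univ : Finset (Fin n)),
        Gb W (fun y : 𝔼 => b (m i) (y i)) x (2 * M) A := fun i _ => by
      rw [two_mul]
      exact (Gb_comp_coord hΘ _ i x).sub (Gb_comp_coord hΘ _ i x)
    simpa using Gb.prod hW Finset.univ (fun _ _ => by positivity) (fun _ _ => hA) h
  · set J := box.filter fun m => ∀ i, s (m i) ≤ x i ∧ x i ≤ s (m i) + 2 * δ with hJ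
    refine ⟨J, ?_, fun m hm hmI => ?_, fun m hm hmI => ?_⟩
    · have hsub : J ⊆ Fintype.piFinset fun i =>
          Finset.Icc (⌊(x i + L) / δ⌋₊ - 2) ⌊(x i + L) / δ⌋₊ := by
        intro m hm
        rw [Fintype.mem_piFinset]
        intro i
        obtain ⟨h2, h3⟩ := (Finset.mem_filter.1 hm).2 i
        simp only [hs] at h2 h3
        have h4 : m i ≤ ⌊(x i + L) / δ⌋₊ := by
          refine Nat.le_floor ?_
          rw [le_div_iff₀ hδ]
          linarith
        have h5 : ⌊(x i + L) / δ⌋₊ ≤ m i + 2 := by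
          refine Nat.floor_le_of_le ?_
          rw [div_le_iff₀ hδ]
          push_cast
          linarith
        rw [Finset.mem_Icc]
        omega
      refine (Finset.card_le_card hsub).trans ?_
      rw [Fintype.card_piFinset]
      calc _ ≤ ∏ _i : Fin n, 3 := Finset.prod_le_prod' fun i _ => by
            rw [Nat.card_Icc]
            omega
        _ = _ := by simp
    · have hmb := (Finset.mem_filter.1 hmI).1
      have : ∃ i, x i < s (m i) ∨ s (m i) + 2 * δ < x i := by
        by_contra! hc
        exact hm (Finset.mem_filter.2 ⟨hmb, hc⟩)
      obtain ⟨i, hi⟩ := this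
      have hci : Continuous fun y : 𝔼 => y i := by fun_prop
      rcases hi with hi | hi
      · filter_upwards [hci.continuousAt.eventually_lt_const hi] with y hy
        exact hψ0 m y i (Or.inl hy.le)
      · filter_upwards [hci.continuousAt.eventually_const_lt hi] with y hy
        exact hψ0 m y i (Or.inr hy.le)
    · refine norm_le_of_coord (by positivity) fun i => ?_
      have h2 := (Finset.mem_filter.1 hm).2 i
      have h3 := (hpt m hmI).2 i
      rw [PiLp.sub_apply, abs_le]
      constructor <;> linarith [h2.1, h2.2, h3.1, h3.2]
  · have hball : Metric.ball a (min 1 δ) ∈ nhds a :=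
      Metric.ball_mem_nhds a (lt_min one_pos hδ)
    filter_upwards [hball] with x hx
    rw [Metric.mem_ball, dist_eq_norm] at hx
    have hxa : ∀ i, |x i - a i| ≤ ‖x - a‖ := fun i => by
      simpa using PiLp.norm_apply_le (x - a) i
    have har : ∀ i, |a i| ≤ r := fun i => by
      have h2 : ‖a‖ ≤ r := by simpa using hr ha
      exact (by simpa using PiLp.norm_apply_le a i : |a i| ≤ ‖a‖).trans h2
    have hsum : ∑ m ∈ box, ψ m x = 1 := by
      simp only [hψ, hbox]
      rw [← Finset.prod_univ_sum (fun _ => Finset.range R) fun i j => b j (x i)]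
      refine Finset.prod_eq_one fun i _ => ?_
      have h2 := abs_le.1 (har i)
      have h3 := abs_le.1 ((hxa i).trans (hx.le.trans (min_le_left _ _)))
      simp only [hb]
      rw [Finset.sum_range_sub' (fun j => Θ (x i - s j)), h1, h0, sub_zero]
      · simp only [hs]
        linarith [h2.1, h2.2, h3.1, h3.2]
      · simp only [hs]
        push_cast
        linarith [h2.1, h2.2, h3.1, h3.2]
    rw [← hsum]
    refine Finset.sum_subset (Finset.filter_subset _ _) fun m hm hmI => ?_
    by_contra hne
    refine hmI (Finset.mem_filter.2 ⟨hm, a, ha, fun i => ?_⟩)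
    have h2 : ¬ (x i ≤ s (m i) ∨ s (m i) + 2 * δ ≤ x i) := fun h => hne (hψ0 m x i h)
    push Not at h2
    have h3 := abs_le.1 ((hxa i).trans (hx.le.trans (min_le_right _ _)))
    constructor <;> linarith [h2.1, h2.2, h3.1, h3.2]

/-- Partitions of unity on the scale `c τ_q` whose derivatives are controlled by the weight sequence
of `ν`, up to a power of `e^q P_q`. -/
lemma GoodSeq.exists_isPartition {ν : ℕ → ℝ} (h : GoodSeq ν) {q : ℕ} (hq : 0 < q) {c : ℝ}
    (hc : 0 < c) {E : Set 𝔼} (hE : Bornology.IsBounded E) :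
    ∃ I ψ pt, IsPartition (prodSeq ν) E (c * tauSeq ν q / 2)
      ((2 * (Real.exp 1 ^ q * P ν q)) ^ n) (n * (36 * (n + 1) / c)) I ψ pt := by
  have hτ := h.tau_pos q
  have hP := h.P_pos q
  have hc' : 0 < c / (18 * (n + 1)) := by positivity
  obtain ⟨Θ, hΘ, h0, h1, hb⟩ := h.exists_step hq hc'
  obtain ⟨I, ψ, pt, hI⟩ := exists_isPartition_of_step h.goodW hE
    (δ := 3 * (c / (18 * (n + 1))) * tauSeq ν q) (by positivity) (by positivity)
    (A := 2 / (c / (18 * (n + 1)))) (by positivity) (fun t => ⟨hΘ, fun k => hb k t⟩) h0 h1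
  refine ⟨I, ψ, pt, ?_⟩
  convert hI using 1
  · field_simp
    norm_num
  · field_simp
    ring

end Partition

/-! ### Gluing Taylor polynomials -/

section Glue

variable {n : ℕ}

local notation "𝔼" => EuclideanSpace ℝ (Fin n)

variable {W : ℕ → ℝ} {E : Set (EuclideanSpace ℝ (Fin n))} {r M A r' M' A' MT AT : ℝ}
  {I I' : Finset (Fin n → ℕ)} {ψ ψ' : (Fin n → ℕ) → EuclideanSpace ℝ (Fin n) → ℝ}
  {pt pt' : (Fin n → ℕ) → EuclideanSpace ℝ (Fin n)}

lemma IsPartition.Gb_sum (h : IsPartition W E r M A I ψ pt) (hW : GoodW W)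
    (hM : 0 ≤ M) (hA : 0 ≤ A) (hMT : 0 ≤ MT) (hAT : 0 ≤ AT) {T : (Fin n → ℕ) → 𝔼 → ℝ} {x : 𝔼}
    (hs : ∀ m, ContDiff ℝ (⊤ : ℕ∞) (T m))
    (hT : ∀ m ∈ I, ‖x - pt m‖ ≤ r → Gb W (T m) x MT AT) :
    Gb W (fun y => ∑ m ∈ I, ψ m y * T m y) x (3 ^ n * (M * MT)) (A + AT) := by
  obtain ⟨J, hJ, hz, hd⟩ := h.loc x
  have := Gb.sum_of_card I J (F := fun m y => ψ m y * T m y) hJ (mul_nonneg hM hMT)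
    (fun m _ => (h.gb m x).smooth.mul (hs m)) (fun m hm hmJ => ?_)
    (fun m hm hmJ => (h.gb m x).mul hW (hT m hm (hd m hmJ hm)) hM hMT hA hAT) hW
    (add_nonneg hA hAT)
  · exact_mod_cast this
  · filter_upwards [hz m hmJ hm] with y hy
    simp [hy]

lemma IsPartition.Gb_sum_sum (h : IsPartition W E r M A I ψ pt)
    (h' : IsPartition W E r' M' A I' ψ' pt') (hW : GoodW W)
    (hM : 0 ≤ M) (hM' : 0 ≤ M') (hA : 0 ≤ A) (hMT : 0 ≤ MT) (hAT : 0 ≤ AT)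
    {T T' : (Fin n → ℕ) → 𝔼 → ℝ} {x : 𝔼} (hs : ∀ m, ContDiff ℝ (⊤ : ℕ∞) (T m))
    (hs' : ∀ m, ContDiff ℝ (⊤ : ℕ∞) (T' m))
    (hT : ∀ m ∈ I, ∀ m' ∈ I', ‖x - pt m‖ ≤ r → ‖x - pt' m'‖ ≤ r' →
      Gb W (fun y => T m y - T' m' y) x MT AT) :
    Gb W (fun y => ∑ s ∈ I ×ˢ I', ψ s.1 y * ψ' s.2 y * (T s.1 y - T' s.2 y)) x
      (9 ^ n * (M * M' * MT)) (A + A + AT) := by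
  obtain ⟨J, hJ, hz, hd⟩ := h.loc x
  obtain ⟨J', hJ', hz', hd'⟩ := h'.loc x
  have hcard : (J ×ˢ J').card ≤ 9 ^ n := by
    rw [Finset.card_product, show 9 = 3 * 3 from rfl, mul_pow]
    exact Nat.mul_le_mul hJ hJ'
  have := Gb.sum_of_card (I ×ˢ I') (J ×ˢ J')
    (F := fun s y => ψ s.1 y * ψ' s.2 y * (T s.1 y - T' s.2 y)) hcard
    (M := M * M' * MT) (A := A + A + AT) (W := W) (x := x) (by positivity)
    (fun s _ => ((h.gb s.1 x).smooth.mul (h'.gb s.2 x).smooth).mul ((hs _).sub (hs' _)))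
    (fun s hs hsJ => ?_) (fun s hs hsJ => ?_) hW (by positivity)
  · exact_mod_cast this
  · rw [Finset.mem_product] at hs hsJ
    by_cases h1 : s.1 ∈ J
    · filter_upwards [hz' s.2 (fun h2 => hsJ ⟨h1, h2⟩) hs.2] with y hy
      simp [hy]
    · filter_upwards [hz s.1 h1 hs.1] with y hy
      simp [hy]
  · rw [Finset.mem_product] at hs hsJ
    exact ((h.gb _ x).mul hW (h'.gb _ x) hM hM' hA hA).mul hW
      (hT _ hs.1 _ hs.2 (hd _ hsJ.1 hs.1) (hd' _ hsJ.2 hs.2)) (by positivity) hMT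
      (by positivity) hAT

/-- Near `E` the double sum telescopes. -/
lemma IsPartition.sum_sum_eq (h : IsPartition W E r M A I ψ pt)
    (h' : IsPartition W E r' M' A' I' ψ' pt') (T T' : (Fin n → ℕ) → 𝔼 → ℝ) {a : 𝔼} (ha : a ∈ E) :
    (fun y => ∑ s ∈ I ×ˢ I', ψ s.1 y * ψ' s.2 y * (T s.1 y - T' s.2 y)) =ᶠ[nhds a]
      fun y => ∑ m ∈ I, ψ m y * T m y - ∑ m ∈ I', ψ' m y * T' m y := by
  filter_upwards [h.one a ha, h'.one a ha] with y h1 h2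
  have e1 : ∑ m ∈ I, ψ m y * T m y = ∑ s ∈ I ×ˢ I', ψ s.1 y * ψ' s.2 y * T s.1 y := by
    rw [Finset.sum_product]
    refine Finset.sum_congr rfl fun m _ => ?_
    dsimp only
    rw [← Finset.sum_mul, ← Finset.mul_sum, h2, mul_one]
  have e2 : ∑ m ∈ I', ψ' m y * T' m y = ∑ s ∈ I ×ˢ I', ψ s.1 y * ψ' s.2 y * T' s.2 y := by
    rw [Finset.sum_product_right]
    refine Finset.sum_congr rfl fun m _ => ?_
    dsimp only
    rw [← Finset.sum_mul, ← Finset.sum_mul, h1, one_mul]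
  rw [e1, e2, ← Finset.sum_sub_distrib]
  exact Finset.sum_congr rfl fun s _ => by ring

lemma IsPartition.sum_sub_eq (h : IsPartition W E r M A I ψ pt) (T : (Fin n → ℕ) → 𝔼 → ℝ)
    (g : 𝔼 → ℝ) {a : 𝔼} (ha : a ∈ E) :
    (fun y => ∑ m ∈ I, ψ m y * T m y - g y) =ᶠ[nhds a]
      fun y => ∑ m ∈ I, ψ m y * (T m y - g y) := by
  filter_upwards [h.one a ha] with y h1
  simp only [mul_sub, Finset.sum_sub_distrib]
  rw [← Finset.sum_mul, h1, one_mul]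

/-- A series whose terms have geometrically decaying derivative bounds can be differentiated
termwise. -/
lemma Gb_tsum {V : Type*} [NormedAddCommGroup V] [NormedSpace ℝ V] {w : ℕ → V → ℝ} {S : ℝ}
    (h : ∀ q x, Gb W (w q) x (S * (1 / 2) ^ q) A) (x : V) :
    Gb W (fun y => ∑' q, w q y) x (2 * S) A ∧
      ∀ k, HasSum (fun q => iteratedFDeriv ℝ k (w q) x)
        (iteratedFDeriv ℝ k (fun y => ∑' q, w q y) x) := by
  have hsum : ∀ k, HasSum (fun q : ℕ => S * (1 / 2) ^ q * A ^ k * W k) (S * 2 * A ^ k * W k) :=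
    fun k => ((hasSum_geometric_two.mul_left S).mul_right (A ^ k)).mul_right (W k)
  have hb : ∀ (k q : ℕ) (x : V), (k : ℕ∞) ≤ ⊤ →
      ‖iteratedFDeriv ℝ k (w q) x‖ ≤ S * (1 / 2) ^ q * A ^ k * W k :=
    fun k q x _ => (h q x).bound k
  have hs : ∀ k : ℕ, Summable fun q => iteratedFDeriv ℝ k (w q) x := fun k =>
    Summable.of_norm_bounded (hsum k).summable fun q => hb k q x le_top
  have e : ∀ k : ℕ, iteratedFDeriv ℝ k (fun y => ∑' q, w q y) x =
      ∑' q, iteratedFDeriv ℝ k (w q) x := fun k =>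
    iteratedFDeriv_tsum_apply (N := ⊤) (fun q => (h q x).smooth)
      (v := fun k q => S * (1 / 2) ^ q * A ^ k * W k) (fun k _ => (hsum k).summable) hb le_top x
  refine ⟨⟨contDiff_tsum (N := ⊤) (fun q => (h q x).smooth)
      (v := fun k q => S * (1 / 2) ^ q * A ^ k * W k) (fun k _ => (hsum k).summable) hb,
      fun k => ?_⟩, fun k => ?_⟩
  · rw [e k]
    refine (tsum_of_norm_bounded (hsum k) fun q => hb k q x le_top).trans (le_of_eq ?_)
    ring
  · rw [e k]
    exact (hs k).hasSum

end Glue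

/-! ### The extension -/

section Extension

variable {n : ℕ}

local notation "𝔼" => EuclideanSpace ℝ (Fin n)

/-- The quantitative input of the extension: a Whitney jet for the descendant of `ν`, weights `ν'`
and parameters `K`, `c` such that level `q` uses the scale `c τ'_q` and Taylor polynomials of
degree `K q - 1`, and the derivative bounds for the level `q` correction decay geometrically. -/
structure ExtData (ν ν' : ℕ → ℝ) (E : Set 𝔼) (F : (Fin n → ℕ) → 𝔼 → ℝ) (K : ℕ)
    (C ρ c S : ℝ) : Prop where
  h : GoodSeq ν
  h' : GoodSeq ν'
  hC : 0 < C
  hρ : 0 < ρ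
  hc : 0 < c
  hK : 0 < K
  hF : ∀ α, ∀ a ∈ E, |F α a| ≤ C * ρ ^ (∑ i, α i) * prodSeq (sigmaSeq ν) (∑ i, α i)
  hR : ∀ p : ℕ, ∀ α : Fin n → ℕ, ∑ i, α i ≤ p → ∀ a ∈ E, ∀ b ∈ E,
    |Rrem F a p α b| ≤ C * ρ ^ (p + 1) * prodSeq (sigmaSeq ν) (p + 1) *
      ‖b - a‖ ^ (p + 1 - ∑ i, α i) / (Nat.factorial (p + 1 - ∑ i, α i) : ℝ)
  tau : ∀ q, ρ * (c * tauSeq ν' q) * tauSeq ν 1 ≤ tauSeq ν (K * (q + 1))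
  decay : ∀ q, 9 ^ n * ((2 * (Real.exp 1 ^ (q + 1) * GoodSeq.P ν' (q + 1))) ^ n *
    (2 * (Real.exp 1 ^ q * GoodSeq.P ν' q)) ^ n *
    (C * 2 ^ (K * q) * flat ν (ρ * (c * tauSeq ν' q)) (K * q) * GoodSeq.P ν' q *
      (2 ^ n * ((n + 1) * Real.exp 1)) ^ (K * (q + 1)))) ≤ S * (1 / 2) ^ q

lemma pderivMulti_sub (α : Fin n → ℕ) {f g : 𝔼 → ℝ} (hf : ContDiff ℝ (⊤ : ℕ∞) f)
    (hg : ContDiff ℝ (⊤ : ℕ∞) g) (x : 𝔼) :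
    pderivMulti α (fun y => f y - g y) x = pderivMulti α f x - pderivMulti α g x := by
  obtain ⟨v, -, h⟩ := exists_pderivMulti_eq α
  have : iteratedFDeriv ℝ (∑ i, α i) (fun y => f y - g y) x =
      iteratedFDeriv ℝ (∑ i, α i) f x - iteratedFDeriv ℝ (∑ i, α i) g x :=
    iteratedFDeriv_sub_apply (smooth_le hf _).contDiffAt (smooth_le hg _).contDiffAt
  rw [h _ (hf.sub hg), h _ hf, h _ hg, this]
  rfl

namespace ExtData

variable {ν ν' : ℕ → ℝ} {E : Set (EuclideanSpace ℝ (Fin n))}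
  {F : (Fin n → ℕ) → EuclideanSpace ℝ (Fin n) → ℝ} {K : ℕ} {C ρ c S : ℝ}

lemma one_le_bump (D : ExtData ν ν' E F K C ρ c S) (q : ℕ) :
    1 ≤ (2 * (Real.exp 1 ^ q * GoodSeq.P ν' q)) ^ n := by
  have h1 : (1 : ℝ) ≤ Real.exp 1 ^ q := one_le_pow₀ (Real.one_le_exp (by norm_num))
  have h2 := D.h'.one_le_P q
  exact one_le_pow₀ (by nlinarith)

lemma one_le_G (n : ℕ) : (1 : ℝ) ≤ 2 ^ n * ((n + 1) * Real.exp 1) := by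
  have h1 : (1 : ℝ) ≤ Real.exp 1 := Real.one_le_exp (by norm_num)
  have h2 : (1 : ℝ) ≤ n + 1 := by simp
  have h3 : (1 : ℝ) ≤ 2 ^ n := one_le_pow₀ (by norm_num)
  exact one_le_mul_of_one_le_of_one_le h3 (one_le_mul_of_one_le_of_one_le h2 h1)

/-- The extension `u 0 + ∑ (u (q + 1) - u q)`, where `u q` glues Taylor polynomials of `F` on the
scale `c τ'_{q+1}` and the differences are written as double sums over two partitions of unity, so
that they are also small away from `E`. -/
lemma exists_extension (D : ExtData ν ν' E F K C ρ c S) (hE : Bornology.IsBounded E) :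
    ∃ f : 𝔼 → ℝ, MemBM (prodSeq ν') f ∧ ∀ α, ∀ a ∈ E, pderivMulti α f a = F α a := by
  have h' := D.h'
  have hc := D.hc
  have hC := D.hC
  have hW := h'.goodW
  have hG := one_le_G n
  set G : ℝ := 2 ^ n * ((n + 1) * Real.exp 1) with hGdef
  choose I ψ pt hI using fun q : ℕ => h'.exists_isPartition (q.succ_pos) hc hE
  set b : ℕ → ℝ := fun q => (2 * (Real.exp 1 ^ q * GoodSeq.P ν' q)) ^ n with hb
  have hb1 : ∀ q, 1 ≤ b q := fun q => D.one_le_bump q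
  have hb0 : ∀ q, 0 ≤ b q := fun q => zero_le_one.trans (hb1 q)
  set A : ℝ := n * (36 * (n + 1) / c) with hA
  have hA0 : 0 ≤ A := by positivity
  have hc1 : 0 ≤ 1 / c := by positivity
  set p : ℕ → ℕ := fun q => K * (q + 1) - 1 with hp
  have hp1 : ∀ q, p q + 1 = K * (q + 1) := fun q =>
    Nat.sub_add_cancel (Nat.mul_pos D.hK q.succ_pos)
  have hple : ∀ q, p q ≤ p (q + 1) := fun q =>
    Nat.sub_le_sub_right (Nat.mul_le_mul_left K (Nat.le_succ _)) 1
  have hqp : ∀ q, q ≤ p q := fun q => by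
    have := hp1 q
    have := Nat.le_mul_of_pos_left (q + 1) D.hK
    omega
  have hτp : ∀ q, ρ * (c * tauSeq ν' q) * tauSeq ν 1 ≤ tauSeq ν (p q) := fun q =>
    (D.tau q).trans (D.h.tau_anti (by have := hp1 q; omega))
  have hτp' : ∀ q, ρ * (c * tauSeq ν' (q + 1)) * tauSeq ν 1 ≤ tauSeq ν (p q) := fun q => by
    refine le_trans ?_ (hτp q)
    have := h'.tau_anti (Nat.le_succ q)
    have := D.h.tau_pos 1
    have := D.hρ
    gcongr
  set T : ℕ → (Fin n → ℕ) → 𝔼 → ℝ := fun q m => Tpoly F (pt q m) (p q) with hT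
  have hTs : ∀ q m, ContDiff ℝ (⊤ : ℕ∞) (T q m) := fun q m => Tpoly_contDiff _ _ _
  set u : ℕ → 𝔼 → ℝ := fun q y => ∑ m ∈ I q, ψ q m y * T q m y with hu
  set w : ℕ → 𝔼 → ℝ := fun q y => ∑ s ∈ I (q + 1) ×ˢ I q,
    ψ (q + 1) s.1 y * ψ q s.2 y * (T (q + 1) s.1 y - T q s.2 y) with hw
  set MT : ℕ → ℝ := fun q => C * 2 ^ (K * q) * flat ν (ρ * (c * tauSeq ν' q)) (K * q) *
    GoodSeq.P ν' q * G ^ (K * (q + 1)) with hMT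
  have hMT0 : ∀ q, 0 ≤ MT q := fun q => by
    have h1 := D.h.flat_pos (mul_pos D.hρ (mul_pos hc (h'.tau_pos q))) (K * q)
    have h2 := h'.P_pos q
    positivity
  have hdec : ∀ q, 9 ^ n * (b (q + 1) * b q * MT q) ≤ S * (1 / 2) ^ q := D.decay
  have hS : 0 ≤ S := by
    have := (hdec 0).trans' (mul_nonneg (by positivity)
      (mul_nonneg (mul_nonneg (hb0 _) (hb0 _)) (hMT0 0)))
    simpa using this
  -- the correction `w q` has level `q + 1`, as levels start at `1`
  have hwG : ∀ q x, Gb (prodSeq ν') (w q) x (S * (1 / 2) ^ q) (A + A + 1 / c) := fun q x => by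
    have key := (hI (q + 1)).Gb_sum_sum (hI q) hW (hb0 _) (hb0 _) hA0 (hMT0 (q + 1)) hc1
      (hTs (q + 1)) (hTs q) (x := x) fun m hm m' hm' hx hx' => ?_
    · have h1 := hb0 (q + 1 + 1)
      have h2 := hb0 (q + 1)
      have h3 := hMT0 (q + 1)
      refine key.mono hW (by positivity) (by positivity)
        ((hdec (q + 1)).trans (mul_le_mul_of_nonneg_left
          (pow_le_pow_of_le_one (by norm_num) (by norm_num) (Nat.le_succ q)) hS)) le_rfl
    · have hτ := h'.tau_anti (Nat.le_succ (q + 1))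
      have hx2 : ‖x - pt (q + 1) m‖ ≤ c * tauSeq ν' (q + 1) / 2 := by
        refine hx.trans ?_
        gcongr
      have hpos := mul_pos hc (h'.tau_pos (q + 1))
      have hmm : ‖pt (q + 1) m - pt q m'‖ ≤ c * tauSeq ν' (q + 1) := by
        have := norm_sub_le_norm_sub_add_norm_sub (pt (q + 1) m) x (pt q m')
        rw [norm_sub_rev (pt (q + 1) m) x] at this
        linarith
      have key := Gb_Tpoly_sub D.h h' hC D.hρ hc D.hF D.hR (hple q) (hτp (q + 1))
        ((hI (q + 1)).mem m hm) ((hI q).mem m' hm') hmm (by linarith : ‖x - _‖ ≤ _)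
      rw [hp1, hp1] at key
      exact key
  have huG : ∀ x, Gb (prodSeq ν') (u 0) x
      (3 ^ n * (b 1 * (C * GoodSeq.P ν' 1 * G ^ (p 0 + 1)))) (A + A + 1 / c) := fun x => by
    have hP := h'.P_pos 1
    have hb1 := hb0 1
    refine ((hI 0).Gb_sum hW (hb0 _) hA0 (by positivity :
      0 ≤ C * GoodSeq.P ν' 1 * G ^ (p 0 + 1)) hc1 (hTs 0) fun m hm hx => ?_).mono hW
      (by positivity) (by positivity) le_rfl (by linarith)
    have hpos := mul_pos hc (h'.tau_pos 1)
    refine h'.Gb_poly hc (by simp at hx ⊢; linarith) hC.le fun α hα => ?_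
    have := coef_jet_le D.h hC D.hρ hpos (D.hF α _ ((hI 0).mem m hm)) (Nat.zero_le _) hα (hτp' 0)
    simpa [flat] using this
  have hfs := Gb_tsum hwG
  refine ⟨fun y => u 0 y + ∑' q, w q y, ?_, fun α a ha => ?_⟩
  · set L := 3 ^ n * (b 1 * (C * GoodSeq.P ν' 1 * G ^ (p 0 + 1))) + 2 * S with hL
    have hf : ∀ x, Gb (prodSeq ν') (fun y => u 0 y + ∑' q, w q y) x L (A + A + 1 / c) := fun x =>
      (huG x).add (hfs x).1
    refine ⟨(hf 0).smooth, L + 1, ?_, A + A + 1 / c, by positivity, fun α x => ?_⟩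
    rotate_left
    · refine (abs_pderivMulti_le α (hf x).smooth x).trans (((hf x).bound _).trans ?_)
      have := h'.prodSeq_pos (∑ i, α i)
      gcongr
      exact (lt_add_one _).le
    · have := h'.P_pos 1
      have := hb0 1
      positivity
  · have hus : ∀ q, ContDiff ℝ (⊤ : ℕ∞) (u q) := fun q =>
      ContDiff.sum fun m _ => ((hI q).gb m a).smooth.mul (hTs q m)
    have hf : ContDiff ℝ (⊤ : ℕ∞) fun y => u 0 y + ∑' q, w q y := ((huG a).add (hfs a).1).smooth
    obtain ⟨v, -, hv⟩ := exists_pderivMulti_eq α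
    -- near `a` the partial sums of the series are the functions `u Q`
    have hlim : Filter.Tendsto (fun Q => pderivMulti α (u Q) a) Filter.atTop
        (nhds (pderivMulti α (fun y => u 0 y + ∑' q, w q y) a)) := by
      have h1 := ((hfs a).2 (∑ i, α i)).tendsto_sum_nat
      have e1 : ∀ q, iteratedFDeriv ℝ (∑ i, α i) (w q) a =
          iteratedFDeriv ℝ (∑ i, α i) (u (q + 1)) a - iteratedFDeriv ℝ (∑ i, α i) (u q) a := by
        intro q
        rw [(((hI (q + 1)).sum_sum_eq (hI q) (T (q + 1)) (T q) ha).iteratedFDeriv ℝ _).eq_of_nhds]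
        exact iteratedFDeriv_sub_apply (smooth_le (hus _) _).contDiffAt
          (smooth_le (hus _) _).contDiffAt
      simp only [e1, Finset.sum_range_sub fun q => iteratedFDeriv ℝ (∑ i, α i) (u q) a] at h1
      have h2 := h1.const_add (iteratedFDeriv ℝ (∑ i, α i) (u 0) a)
      simp only [add_sub_cancel] at h2
      have e2 : iteratedFDeriv ℝ (∑ i, α i) (fun y => u 0 y + ∑' q, w q y) a =
          iteratedFDeriv ℝ (∑ i, α i) (u 0) a +
            iteratedFDeriv ℝ (∑ i, α i) (fun y => ∑' q, w q y) a :=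
        iteratedFDeriv_add_apply (smooth_le (hus 0) _).contDiffAt
          (smooth_le (hfs a).1.smooth _).contDiffAt
      rw [← e2] at h2
      rw [hv _ hf]
      simp only [hv _ (hus _)]
      exact ((ContinuousMultilinearMap.apply ℝ (fun _ => 𝔼) ℝ v).continuous.tendsto _).comp h2
    refine tendsto_nhds_unique hlim ?_
    -- `u Q` and the Taylor polynomial at `a` have almost the same derivatives at `a`
    have hbound : ∀ Q, ∑ i, α i ≤ Q → |pderivMulti α (u Q) a - F α a| ≤
        S * (1 / 2) ^ (Q + 1) * ((A + 1 / c) ^ (∑ i, α i) * prodSeq ν' (∑ i, α i)) := by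
      intro Q hQ
      have hTa := Tpoly_contDiff F a (p Q)
      rw [← pderivMulti_Tpoly_self F a (hQ.trans (hqp Q)), ← pderivMulti_sub α (hus Q) hTa]
      refine (abs_pderivMulti_le α ((hus Q).sub hTa) a).trans ?_
      rw [(((hI Q).sum_sub_eq (T Q) (Tpoly F a (p Q)) ha).iteratedFDeriv ℝ _).eq_of_nhds]
      have hpos := mul_pos hc (h'.tau_pos (Q + 1))
      have key := (hI Q).Gb_sum hW (hb0 _) hA0 (hMT0 (Q + 1)) hc1
        (T := fun m y => T Q m y - Tpoly F a (p Q) y) (x := a)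
        (fun m => (hTs Q m).sub hTa) fun m hm hx => ?_
      · refine (key.bound _).trans ?_
        rw [mul_assoc]
        have := h'.prodSeq_pos (∑ i, α i)
        refine mul_le_mul_of_nonneg_right (le_trans ?_ (hdec (Q + 1))) (by positivity)
        have := hb0 (Q + 1)
        have := hMT0 (Q + 1)
        have h3 := hb1 (Q + 1 + 1)
        calc 3 ^ n * (b (Q + 1) * MT (Q + 1)) ≤ 9 ^ n * (1 * (b (Q + 1) * MT (Q + 1))) := by
              rw [one_mul]
              gcongr
              norm_num
          _ ≤ 9 ^ n * (b (Q + 1 + 1) * (b (Q + 1) * MT (Q + 1))) := by gcongr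
          _ = _ := by ring
      · simp only [Nat.succ_eq_add_one] at hx
        have hm' := (hI Q).mem m hm
        have := Gb_Tpoly_sub D.h h' hC D.hρ hc D.hF D.hR le_rfl (hτp' Q) hm' ha
          (by rw [norm_sub_rev]; linarith) (by linarith : ‖a - _‖ ≤ _)
        refine this.mono hW ?_ hc1 ?_ le_rfl
        · have h1 := D.h.flat_pos (mul_pos D.hρ hpos) (p Q + 1)
          have h2 := h'.P_pos (Q + 1)
          positivity
        · have h1 := D.h.flat_pos (mul_pos D.hρ hpos) (K * (Q + 1))
          have h2 := h'.P_pos (Q + 1)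
          rw [hp1]
          refine mul_le_mul_of_nonneg_left (pow_le_pow_right₀ hG ?_) (by positivity)
          exact Nat.mul_le_mul_left K (Nat.le_succ _)
    rw [tendsto_iff_norm_sub_tendsto_zero]
    have hz : Filter.Tendsto (fun Q : ℕ => S * (1 / 2) ^ (Q + 1) *
        ((A + 1 / c) ^ (∑ i, α i) * prodSeq ν' (∑ i, α i))) Filter.atTop (nhds 0) := by
      have h1 : Filter.Tendsto (fun Q : ℕ => (1 / 2 : ℝ) ^ (Q + 1)) Filter.atTop (nhds 0) :=
        (tendsto_pow_atTop_nhds_zero_of_lt_one (by norm_num) (by norm_num)).comp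
          (Filter.tendsto_add_atTop_nat 1)
      simpa using (h1.const_mul S).mul_const
        ((A + 1 / c) ^ (∑ i, α i) * prodSeq ν' (∑ i, α i))
    refine squeeze_zero' (Filter.Eventually.of_forall fun _ => norm_nonneg _) ?_ hz
    filter_upwards [Filter.eventually_ge_atTop (∑ i, α i)] with Q hQ
    exact hbound Q hQ

end ExtData

end Extension

/-! ### Choice of the parameters -/

/-- The scale `θ` beats every factor that is geometric in `q`, and the power `P ^ (-K)` from the
flatness estimate beats the `2 n + 1` powers of `P` from the cutoffs and the Taylor polynomials. -/
lemma decay_aux {n K q : ℕ} {e B G θ C P P₁ fl : ℝ} (he : 1 ≤ e) (hB : 1 ≤ B) (hG : 1 ≤ G)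
    (hC : 0 < C) (hP : 1 ≤ P) (hP₁0 : 0 ≤ P₁) (hP₁ : P₁ ≤ B ^ q * P) (hfl0 : 0 ≤ fl)
    (hfl : fl ≤ (θ ^ q / P) ^ K) (hK : 2 * n + 1 ≤ K) (hθ : 0 < θ) (hθ1 : θ ≤ 1)
    (hD : e ^ (2 * n) * B ^ n * (2 * G) ^ K * θ ≤ 1 / 2) :
    9 ^ n * ((2 * (e ^ (q + 1) * P₁)) ^ n * (2 * (e ^ q * P)) ^ n *
      (C * 2 ^ (K * q) * fl * P * G ^ (K * (q + 1)))) ≤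
      9 ^ n * (2 ^ n * 2 ^ n) * e ^ n * C * G ^ K * (1 / 2) ^ q := by
  have hP0 : 0 < P := one_pos.trans_le hP
  have h1 : P ^ (2 * n + 1) / P ^ K ≤ 1 := by
    rw [div_le_one (by positivity)]
    exact pow_le_pow_right₀ hP hK
  have h2 : e ^ (2 * n) * B ^ n * (2 * G) ^ K * θ ^ K ≤ 1 / 2 := by
    refine le_trans ?_ hD
    have : θ ^ K ≤ θ ^ 1 := pow_le_pow_of_le_one hθ.le hθ1 (by omega)
    rw [pow_one] at this
    gcongr
  calc 9 ^ n * ((2 * (e ^ (q + 1) * P₁)) ^ n * (2 * (e ^ q * P)) ^ n *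
      (C * 2 ^ (K * q) * fl * P * G ^ (K * (q + 1))))
      ≤ 9 ^ n * ((2 * (e ^ (q + 1) * (B ^ q * P))) ^ n * (2 * (e ^ q * P)) ^ n *
        (C * 2 ^ (K * q) * (θ ^ q / P) ^ K * P * G ^ (K * (q + 1)))) := by gcongr
    _ = 9 ^ n * (2 ^ n * 2 ^ n) * e ^ n * C * G ^ K *
        (e ^ (2 * n) * B ^ n * (2 * G) ^ K * θ ^ K) ^ q * (P ^ (2 * n + 1) / P ^ K) := by
      rw [div_pow]
      field_simp
      ring
    _ ≤ 9 ^ n * (2 ^ n * 2 ^ n) * e ^ n * C * G ^ K * (1 / 2) ^ q * 1 := by gcongr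
    _ = _ := mul_one _

/-- Suitable parameters exist once `K ≥ 2 n + 1`. -/
lemma exists_extData {n : ℕ} {ν ν' : ℕ → ℝ} {E : Set (EuclideanSpace ℝ (Fin n))}
    {F : (Fin n → ℕ) → EuclideanSpace ℝ (Fin n) → ℝ} {K : ℕ} {C ρ C₃ C₅ : ℝ}
    (h : GoodSeq ν) (h' : GoodSeq ν') (hC : 0 < C) (hρ : 0 < ρ) (hC₃ : 0 < C₃) (hC₅ : 0 < C₅)
    (hK : 2 * n + 1 ≤ K) (h5 : ∀ k, ν (K * k) ≤ C₅ * ν' k)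
    (h3 : ∀ k : ℕ, ν' (k + 1) / ν' k ≤
      (C₃ + 1) + C₃ * (ν' (k + 1) / ((k : ℝ) + 1)) * tailSum ν' (k + 1))
    (hF : ∀ α, ∀ a ∈ E, |F α a| ≤ C * ρ ^ (∑ i, α i) * prodSeq (sigmaSeq ν) (∑ i, α i))
    (hR : ∀ p : ℕ, ∀ α : Fin n → ℕ, ∑ i, α i ≤ p → ∀ a ∈ E, ∀ b ∈ E,
      |Rrem F a p α b| ≤ C * ρ ^ (p + 1) * prodSeq (sigmaSeq ν) (p + 1) *
        ‖b - a‖ ^ (p + 1 - ∑ i, α i) / (Nat.factorial (p + 1 - ∑ i, α i) : ℝ)) :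
    ∃ c S, ExtData ν ν' E F K C ρ c S := by
  have hK0 : 0 < K := by omega
  have hτ := h.tau_le_tau_mul h' hK0 hC₅ h5
  have hB := h'.tau_le_succ h3
  have hτ1 := h.tau_pos 1
  set B : ℝ := C₃ + 1
  have hB1 : 1 ≤ B := by simp [B, hC₃.le]
  have he : (1 : ℝ) ≤ Real.exp 1 := Real.one_le_exp zero_le_one
  set G : ℝ := 2 ^ n * ((n + 1) * Real.exp 1) with hGdef
  have hG : 1 ≤ G := ExtData.one_le_G n
  set D : ℝ := Real.exp 1 ^ (2 * n) * B ^ n * (2 * G) ^ K with hDdef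
  have hD : 1 ≤ D := one_le_mul_of_one_le_of_one_le (one_le_mul_of_one_le_of_one_le
    (one_le_pow₀ he) (one_le_pow₀ hB1)) (one_le_pow₀ (by linarith))
  set θ : ℝ := 1 / (2 * D * B) with hθdef
  have hθ : 0 < θ := by positivity
  have hθD : D * θ ≤ 1 / 2 := by
    rw [hθdef, mul_one_div, div_le_div_iff₀ (by positivity) two_pos]
    nlinarith
  have hθB : θ * B ≤ 1 := by
    rw [hθdef, one_div_mul_eq_div, div_le_one (by positivity)]
    nlinarith
  have hθ1 : θ ≤ 1 := by nlinarith
  set c : ℝ := θ / (ρ * tauSeq ν 1 * C₅) with hcdef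
  have hc : 0 < c := by positivity
  have hcθ : ρ * c * tauSeq ν 1 * C₅ = θ := by
    rw [hcdef]
    field_simp
  refine ⟨c, 9 ^ n * (2 ^ n * 2 ^ n) * Real.exp 1 ^ n * C * G ^ K,
    ⟨h, h', hC, hρ, hc, hK0, hF, hR, fun q => ?_, fun q => ?_⟩⟩
  · have h1 := h'.tau_pos (q + 1)
    have h2 : C₅ * (ρ * (c * tauSeq ν' q) * tauSeq ν 1) ≤ C₅ * tauSeq ν (K * (q + 1)) :=
      calc C₅ * (ρ * (c * tauSeq ν' q) * tauSeq ν 1) = θ * tauSeq ν' q := by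
            rw [← hcθ]
            ring
        _ ≤ θ * (B * tauSeq ν' (q + 1)) := mul_le_mul_of_nonneg_left (hB q) hθ.le
        _ = θ * B * tauSeq ν' (q + 1) := by ring
        _ ≤ 1 * tauSeq ν' (q + 1) := by gcongr
        _ ≤ C₅ * tauSeq ν (K * (q + 1)) := by simpa using hτ (q + 1)
    exact le_of_mul_le_mul_left h2 hC₅
  · have hfl := flat_le h h' hρ hc hτ q
    rw [hcθ] at hfl
    exact decay_aux he hB1 hG hC (h'.one_le_P q) (h'.P_pos _).le (h'.P_succ_le hB q)
      (h.flat_pos (mul_pos hρ (mul_pos hc (h'.tau_pos q))) _).le hfl hK hθ hθ1 hθD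

/-- Theorem 5.3 (Extension theorem): for an admissible weight matrix 𝔑, `N ∈ 𝔑` with
descendant `S`, and compact `E ⊆ ℝ^n`, every Whitney jet of class `B^{S}` on `E`
extends to a function in `⋃_{Ṅ ∈ 𝔑} B^{Ṅ}(ℝ^n)`. -/
theorem stmt_14 (n : ℕ) (𝔑 : Set (ℕ → ℝ)) (hadm : IsAdmissible 𝔑)
    (ν : ℕ → ℝ) (hν : ν ∈ 𝔑)
    (E : Set (EuclideanSpace ℝ (Fin n))) (hE : IsCompact E)
    (F : (Fin n → ℕ) → EuclideanSpace ℝ (Fin n) → ℝ)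
    (hF : IsWhitneyJet (prodSeq (sigmaSeq ν)) E F) :
    ∃ ν' ∈ 𝔑, ∃ f : EuclideanSpace ℝ (Fin n) → ℝ,
      MemBM (prodSeq ν') f ∧ ∀ α : Fin n → ℕ, ∀ a ∈ E, pderivMulti α f a = F α a := by
  obtain ⟨hw, -, -, h2, h3, -, h5⟩ := hadm
  have good : ∀ μ ∈ 𝔑, GoodSeq μ := fun μ hμ =>
    ⟨(hw μ hμ).1, (hw μ hμ).2.1, (hw μ hμ).2.2.1, h2 μ hμ⟩
  obtain ⟨-, C, hC, ρ, hρ, hFb, hR⟩ := hF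
  obtain ⟨ν', hν', C₅, hC₅, h5'⟩ := exists_dilate h5 hν (2 * n + 1)
  obtain ⟨C₃, hC₃, h3'⟩ := h3 ν' hν'
  obtain ⟨c, S, D⟩ := exists_extData (good ν hν) (good ν' hν') hC hρ hC₃ hC₅
    Nat.lt_two_pow_self.le h5' h3' hFb hR
  exact ⟨ν', hν', D.exists_extension hE.isBounded⟩
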